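/- arXiv:2401.00837 — 2 statements merged into one kernel-verified Lean document; each statement's English description precedes it below -/
import Mathlib

section
/- (Proposition: Gaussian asymptotics) With the zero-drift mostly symmetric setup and δ = n^{-β} for a constant 1/3 < β < 1/2, one has π^{-d} ∫_{(-δ,δ)^d} S̄(e^{iθ_1},…,e^{iθ_d})^n dθ ∼ S(1)^n · n^{-d/2} · S(1)^{d/2} / (π^{d/2} (b_1 ··· b_d)^{1/2}) as n → ∞. -/
open Finset Filter MeasureTheory
open scoped Classical Real

noncomputable section

/-- Total weight of walks of length `n` with steps in `S` (weighted by `w`),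
starting at the origin and never leaving `ℕ^d`. -/
def walkWeight (d : ℕ) (S : Finset (Fin d → ℤ)) (w : (Fin d → ℤ) → ℝ) (n : ℕ) : ℝ :=
  ∑ f : Fin n → {i // i ∈ S},
    if ∀ m : ℕ, m ≤ n → ∀ j : Fin d,
        0 ≤ ∑ k ∈ Finset.univ.filter (fun k : Fin n => (k : ℕ) < m), ((f k : Fin d → ℤ) j)
    then ∏ k : Fin n, w (f k) else 0

/-- The step set `S` (with weights `w`) is symmetric over the `k`-th coordinate axis. -/
def SymmetricAxis (d : ℕ) (S : Finset (Fin d → ℤ)) (w : (Fin d → ℤ) → ℝ) (k : Fin d) : Prop :=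
  ∀ i ∈ S, Function.update i k (-(i k)) ∈ S ∧ w (Function.update i k (-(i k))) = w i

namespace ZeroDrift

variable (d : ℕ) (S : Finset (Fin (d + 1) → ℤ)) (w : (Fin (d + 1) → ℤ) → ℝ)

/-- `S(1)`, the total weight of the step set. -/
def S1 : ℝ := ∑ i ∈ S, w i

/-- `A(ẑ)`: the Laurent polynomial collecting steps with last coordinate `-1`. -/
def AC (z : Fin (d + 1) → ℂ) : ℂ :=
  ∑ i ∈ S.filter fun i => i (Fin.last d) = -1,
    (w i : ℂ) * ∏ j : Fin d, z (Fin.castSucc j) ^ (i (Fin.castSucc j))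

/-- `B(ẑ)`: the Laurent polynomial collecting steps with last coordinate `1`. -/
def BC (z : Fin (d + 1) → ℂ) : ℂ :=
  ∑ i ∈ S.filter fun i => i (Fin.last d) = 1,
    (w i : ℂ) * ∏ j : Fin d, z (Fin.castSucc j) ^ (i (Fin.castSucc j))

/-- `Q(ẑ)`: the Laurent polynomial collecting steps with last coordinate `0`. -/
def QC (z : Fin (d + 1) → ℂ) : ℂ :=
  ∑ i ∈ S.filter fun i => i (Fin.last d) = 0,
    (w i : ℂ) * ∏ j : Fin d, z (Fin.castSucc j) ^ (i (Fin.castSucc j))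

/-- The characteristic Laurent polynomial `S(z)` evaluated at `z : ℂ^{d+1}`. -/
def SC (z : Fin (d + 1) → ℂ) : ℂ :=
  ∑ i ∈ S, (w i : ℂ) * ∏ j : Fin (d + 1), z j ^ (i j)

/-- `S̄(z) = S(z_1,…,z_{d},1/z_{d+1})` evaluated at `z : ℂ^{d+1}`. -/
def SbarC (z : Fin (d + 1) → ℂ) : ℂ :=
  ∑ i ∈ S, (w i : ℂ) *
    (∏ j : Fin d, z (Fin.castSucc j) ^ (i (Fin.castSucc j))) *
    z (Fin.last d) ^ (-(i (Fin.last d)))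

/-- The numerator `G(z,t)` of the diagonal representation. -/
def GC (z : Fin (d + 1) → ℂ) (t : ℂ) : ℂ :=
  (∏ j : Fin d, (1 + z (Fin.castSucc j))) *
    (1 - t * (∏ j, z j) * (QC d S w z + 2 * z (Fin.last d) * AC d S w z))

/-- The denominator `H(z,t) = H_1 H_2 H_3` of the diagonal representation. -/
def HC (z : Fin (d + 1) → ℂ) (t : ℂ) : ℂ :=
  (1 - z (Fin.last d)) * (1 - t * (∏ j, z j) * SbarC d S w z) *
    (1 - t * (∏ j, z j) * (QC d S w z + z (Fin.last d) * AC d S w z))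

/-- The point of `ℂ^{d+1}` with coordinates `i^{m_j}` encoded by `m : Fin (d+1) → Fin 4`. -/
def wOf (m : Fin (d + 1) → Fin 4) : Fin (d + 1) → ℂ :=
  fun j => Complex.I ^ (m j : ℕ)

/-- The (indices of the) finite set `Γ` of possible contributing points: `w_j ∈ {±1}` for
`j ≤ d`, `w_{d+1} ∈ {±1,±i}`, and `|1/(w_1⋯w_{d+1} S(w))| = 1/S(1)`. -/
def GammaIdx : Finset (Fin (d + 1) → Fin 4) :=
  Finset.univ.filter fun m =>
    (∀ j : Fin d, m (Fin.castSucc j) = 0 ∨ m (Fin.castSucc j) = 2) ∧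
    ‖1 / ((∏ j, wOf d m j) * SC d S w (wOf d m))‖ = 1 / S1 d S w

/-- The argument (angle) of the point encoded by `m` in coordinate `j`. -/
def argOf (m : Fin (d + 1) → Fin 4) (j : Fin (d + 1)) : ℝ := (m j : ℕ) * π / 2

/-- The box of angles parametrizing the product of arcs `N_w` for `w = wOf m`. -/
def box (m : Fin (d + 1) → Fin 4) (δ : ℝ) : Set (Fin (d + 1) → ℝ) :=
  Set.univ.pi fun j => Set.Ioo (argOf d m j - δ) (argOf d m j + δ)

/-- The parametrization of the torus `|z_j| = 1` (`j ≤ d`), `|z_{d+1}| = 1 - ε`. -/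
def zOf (ε : ℝ) (θ : Fin (d + 1) → ℝ) : Fin (d + 1) → ℂ :=
  fun j => (if j = Fin.last d then (1 - ε : ℂ) else 1) * Complex.exp (Complex.I * θ j)

/-- Angles parametrizing `N = ⋃_{w ∈ Γ} N_w`. -/
def Nparam (δ : ℝ) : Set (Fin (d + 1) → ℝ) := ⋃ m ∈ GammaIdx d S w, box d m δ

/-- The contour integral `(2πi)^{-(d+2)} ∫_{N × C} G/H · dz dt/(z_1⋯z_{d+1}t)^{n+1}`,
parametrized by angles, where `C` is the circle `|t| = r`. -/
def fullIntegral (n : ℕ) (ε δ r : ℝ) : ℂ :=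
  (((2 * π) ^ (d + 2) : ℝ))⁻¹ •
    ∫ θ in Nparam d S w δ,
      ∫ φ in Set.Ioo 0 (2 * π),
        GC d S w (zOf d ε θ) ((r : ℂ) * Complex.exp (Complex.I * φ)) /
            HC d S w (zOf d ε θ) ((r : ℂ) * Complex.exp (Complex.I * φ)) *
          (((∏ j, zOf d ε θ j) * ((r : ℂ) * Complex.exp (Complex.I * φ))) ^ n)⁻¹

/-- The residue integrand
`[(1+z_1)⋯(1+z_d)/(B(ẑ) z_1⋯z_{d+1})]·[(B(ẑ) - z_{d+1}^2 A(ẑ))/(1-z_{d+1})]·S̄(z)^n`,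
parametrized by angles, including the Jacobian factors `i z_j` of `dz_j`. -/
def resIntegrand (n : ℕ) (ε : ℝ) (θ : Fin (d + 1) → ℝ) : ℂ :=
  ((∏ j : Fin d, (1 + zOf d ε θ (Fin.castSucc j))) /
      (BC d S w (zOf d ε θ) * ∏ j, zOf d ε θ j)) *
    ((BC d S w (zOf d ε θ) - zOf d ε θ (Fin.last d) ^ 2 * AC d S w (zOf d ε θ)) /
      (1 - zOf d ε θ (Fin.last d))) *
    SbarC d S w (zOf d ε θ) ^ n *
    ∏ j, Complex.I * zOf d ε θ j

/-- The contour integral `∫_{N_w} (residue integrand) dz` over the product of arcs `N_w`,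
`w = wOf m`, parametrized by angles. -/
def resIntegral (n : ℕ) (ε δ : ℝ) (m : Fin (d + 1) → Fin 4) : ℂ :=
  ∫ θ in box d m δ, resIntegrand d S w n ε θ

end ZeroDrift

/-!
The stated asymptotics are Laplace's method at the origin. Near `θ = 0`, symmetry and zero drift
kill the linear and the mixed quadratic Taylor terms of `S̄(e^{iθ})`, leaving
`S̄(e^{iθ}) / S(1) = 1 - Q(θ) + O(‖θ‖³)` with `Q(θ) = ∑ b_k θ_k² / S(1)`. After the substitution
`θ = x / √n`, the powers `(1 - Q(x) / n + o(1 / n)) ^ n` converge to `exp (-Q(x))` and are dominated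
by `exp (-Q(x) / 2)`, while the rescaled cubes exhaust the space because `√n * n ^ (-β) → ∞`.
-/

open scoped Topology

section LaplaceMethod

variable {E : Type*} [NormedAddCommGroup E] [NormedSpace ℝ E] {Q : QuadraticForm ℝ E} {f : E → ℂ}

theorem natCast_mul_map_inv_sqrt_smul (Q : QuadraticForm ℝ E) {n : ℕ} (hn : n ≠ 0) (x : E) :
    n * Q ((√n)⁻¹ • x) = Q x := by
  have hn' : (n : ℝ) ≠ 0 := Nat.cast_ne_zero.2 hn
  rw [Q.map_smul, smul_eq_mul, ← mul_inv, Real.mul_self_sqrt n.cast_nonneg,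
    mul_inv_cancel_left₀ hn']

theorem tendsto_inv_sqrt_natCast_smul (x : E) :
    Tendsto (fun n : ℕ => (√n)⁻¹ • x) atTop (𝓝 0) := by
  have h : Tendsto (fun n : ℕ => (√n)⁻¹) atTop (𝓝 0) :=
    (Real.tendsto_sqrt_atTop.comp tendsto_natCast_atTop_atTop).inv_tendsto_atTop
  simpa only [zero_smul] using h.smul_const x

theorem tendsto_pow_inv_sqrt_smul (hf : (fun θ => f θ - (1 - Q θ)) =o[𝓝 0] Q) (x : E) :
    Tendsto (fun n : ℕ => f ((√n)⁻¹ • x) ^ n) atTop (𝓝 (Real.exp (-Q x) : ℂ)) := by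
  have hrem : Tendsto (fun n : ℕ =>
      (n : ℂ) * (f ((√n)⁻¹ • x) - (1 - Q ((√n)⁻¹ • x)))) atTop (𝓝 0) := by
    have hcast : (fun n : ℕ => (n : ℂ)) =O[atTop] fun n : ℕ => (n : ℝ) :=
      Asymptotics.isBigO_of_le _ fun n => by simp
    have hconst : (fun n : ℕ => n * Q ((√n)⁻¹ • x)) =ᶠ[atTop] fun _ => Q x := by
      filter_upwards [eventually_ne_atTop 0] with n hn using natCast_mul_map_inv_sqrt_smul Q hn x
    rw [← Asymptotics.isLittleO_one_iff ℝ]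
    exact (hcast.mul_isLittleO (hf.comp_tendsto (tendsto_inv_sqrt_natCast_smul x))).trans_isBigO
      (hconst.trans_isBigO (Asymptotics.isBigO_const_one ℝ _ _))
  have hlin : Tendsto (fun n : ℕ => (n : ℂ) * (f ((√n)⁻¹ • x) - 1)) atTop (𝓝 (-Q x : ℂ)) := by
    have h := hrem.sub_const (Q x : ℂ)
    rw [zero_sub] at h
    refine h.congr' ?_
    filter_upwards [eventually_ne_atTop 0] with n hn
    rw [← natCast_mul_map_inv_sqrt_smul Q hn x]
    push_cast
    ring
  simpa using Complex.tendsto_one_add_pow_exp_of_tendsto hlin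

theorem eventually_norm_le_exp_neg_half (hQ : ∀ x, 0 ≤ Q x) (hQ₀ : Tendsto Q (𝓝 0) (𝓝 0))
    (hf : (fun θ => f θ - (1 - Q θ)) =o[𝓝 0] Q) :
    ∀ᶠ θ in 𝓝 0, ‖f θ‖ ≤ Real.exp (-(Q θ / 2)) := by
  filter_upwards [hf.bound one_half_pos, hQ₀.eventually_le_const one_pos] with θ hrem hle
  rw [Real.norm_of_nonneg (hQ θ)] at hrem
  have hmain : ‖(1 - Q θ : ℂ)‖ = 1 - Q θ := by
    rw [← Complex.ofReal_one, ← Complex.ofReal_sub, Complex.norm_of_nonneg (sub_nonneg.2 hle)]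
  calc ‖f θ‖ = ‖f θ - (1 - Q θ) + (1 - Q θ)‖ := by rw [sub_add_cancel]
    _ ≤ ‖f θ - (1 - Q θ)‖ + ‖(1 - Q θ : ℂ)‖ := norm_add_le _ _
    _ ≤ -(Q θ / 2) + 1 := by rw [hmain]; linarith
    _ ≤ Real.exp (-(Q θ / 2)) := Real.add_one_le_exp _

theorem norm_pow_inv_sqrt_smul_le {ρ : ℝ}
    (hf : ∀ θ ∈ Metric.ball 0 ρ, ‖f θ‖ ≤ Real.exp (-(Q θ / 2))) {n : ℕ} (hn : n ≠ 0) {x : E}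
    (hx : x ∈ Metric.ball 0 (√n * ρ)) : ‖f ((√n)⁻¹ • x) ^ n‖ ≤ Real.exp (-(Q x / 2)) := by
  have hs : 0 < √(n : ℝ) := Real.sqrt_pos.2 (Nat.cast_pos.2 hn.bot_lt)
  have hmem : (√n)⁻¹ • x ∈ Metric.ball (0 : E) ρ := by
    rw [mem_ball_zero_iff] at hx ⊢
    rwa [norm_smul, norm_inv, Real.norm_of_nonneg hs.le, inv_mul_lt_iff₀ hs]
  calc ‖f ((√n)⁻¹ • x) ^ n‖ = ‖f ((√n)⁻¹ • x)‖ ^ n := norm_pow _ _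
    _ ≤ Real.exp (-(Q ((√n)⁻¹ • x) / 2)) ^ n := by gcongr; exact hf _ hmem
    _ = Real.exp (-(n * Q ((√n)⁻¹ • x) / 2)) := by rw [← Real.exp_nat_mul]; ring_nf
    _ = Real.exp (-(Q x / 2)) := by rw [natCast_mul_map_inv_sqrt_smul Q hn]

variable [MeasurableSpace E] [BorelSpace E] [FiniteDimensional ℝ E] {μ : Measure E}
  [μ.IsAddHaarMeasure]

theorem integrable_exp_neg_half (hQ : Integrable (fun x => Real.exp (-Q x)) μ) :
    Integrable (fun x => Real.exp (-(Q x / 2))) μ := by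
  have hscale : ∀ x, Q ((√2)⁻¹ • x) = Q x / 2 := fun x => by
    rw [Q.map_smul, smul_eq_mul, ← mul_inv, Real.mul_self_sqrt zero_le_two, inv_mul_eq_div]
  simpa only [hscale] using hQ.comp_smul (inv_ne_zero (Real.sqrt_ne_zero'.2 two_pos))

theorem sqrt_pow_smul_setIntegral_ball (g : E → ℂ) {n : ℕ} (hn : n ≠ 0) (r : ℝ) :
    √n ^ Module.finrank ℝ E • ∫ θ in Metric.ball 0 r, g θ ∂μ =
      ∫ x in Metric.ball 0 (√n * r), g ((√n)⁻¹ • x) ∂μ := by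
  have hs : 0 < √(n : ℝ) := Real.sqrt_pos.2 (Nat.cast_pos.2 hn.bot_lt)
  rw [Measure.setIntegral_comp_smul_of_pos μ g _ (inv_pos.2 hs), smul_ball (inv_ne_zero hs.ne'),
    smul_zero, norm_inv, Real.norm_of_nonneg hs.le, inv_mul_cancel_left₀ hs.ne', inv_pow, inv_inv]

theorem tendsto_sqrt_pow_smul_setIntegral_ball_pow (hQ : ∀ x, 0 ≤ Q x)
    (hQ₀ : Tendsto Q (𝓝 0) (𝓝 0)) (hQint : Integrable (fun x => Real.exp (-Q x)) μ)
    (hfm : Measurable f) (hf : (fun θ => f θ - (1 - Q θ)) =o[𝓝 0] Q)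
    {r : ℕ → ℝ} (hr : Tendsto r atTop (𝓝 0)) (hr' : Tendsto (fun n : ℕ => √n * r n) atTop atTop) :
    Tendsto (fun n : ℕ => √n ^ Module.finrank ℝ E • ∫ θ in Metric.ball 0 (r n), f θ ^ n ∂μ) atTop
      (𝓝 (∫ x, Real.exp (-Q x) ∂μ : ℝ)) := by
  set F : ℕ → E → ℂ := fun n =>
    (Metric.ball 0 (√n * r n)).indicator fun x => f ((√n)⁻¹ • x) ^ n
  suffices h : Tendsto (fun n => ∫ x, F n x ∂μ) atTop (𝓝 (∫ x, (Real.exp (-Q x) : ℂ) ∂μ)) by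
    rw [← integral_complex_ofReal]
    refine h.congr' ?_
    filter_upwards [eventually_ne_atTop 0] with n hn
    rw [sqrt_pow_smul_setIntegral_ball _ hn, integral_indicator measurableSet_ball]
  obtain ⟨ρ, hρ, hball⟩ := Metric.eventually_nhds_iff_ball.1
    (eventually_norm_le_exp_neg_half hQ hQ₀ hf)
  have hdom : ∀ᶠ n in atTop, ∀ᵐ x ∂μ, ‖F n x‖ ≤ Real.exp (-(Q x / 2)) := by
    filter_upwards [hr.eventually_lt_const hρ, eventually_ne_atTop 0] with n hrn hn
    refine Eventually.of_forall fun x => ?_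
    rw [norm_indicator_eq_indicator_norm]
    refine Set.indicator_apply_le' (fun hx => ?_) fun _ => (Real.exp_pos _).le
    exact norm_pow_inv_sqrt_smul_le hball hn (Metric.ball_subset_ball (by gcongr) hx)
  have hlim : ∀ᵐ x ∂μ, Tendsto (fun n => F n x) atTop (𝓝 (Real.exp (-Q x) : ℂ)) := by
    filter_upwards [(aecover_ball hr').ae_eventually_mem] with x hx
    refine (tendsto_pow_inv_sqrt_smul hf x).congr' ?_
    filter_upwards [hx] with n hn
    exact (Set.indicator_of_mem hn fun x => f ((√n)⁻¹ • x) ^ n).symm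
  have hmeas : ∀ n, Measurable (F n) := fun n =>
    ((hfm.comp (measurable_const_smul (√n)⁻¹)).pow_const n).indicator measurableSet_ball
  exact tendsto_integral_filter_of_dominated_convergence _
    (Eventually.of_forall fun n => (hmeas n).aestronglyMeasurable) hdom
    (integrable_exp_neg_half hQint) hlim

end LaplaceMethod

section WeightedSumSquares

open QuadraticMap (weightedSumSquares weightedSumSquares_apply)

variable {ι : Type*} [Fintype ι] {a : ι → ℝ}

theorem exp_neg_weightedSumSquares (a x : ι → ℝ) :
    Real.exp (-weightedSumSquares ℝ a x) = ∏ k, Real.exp (-a k * x k ^ 2) := by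
  simp only [weightedSumSquares_apply, ← Real.exp_sum, ← Finset.sum_neg_distrib, neg_mul,
    smul_eq_mul, sq]

theorem integrable_exp_neg_weightedSumSquares (ha : ∀ k, 0 < a k) :
    Integrable fun x => Real.exp (-weightedSumSquares ℝ a x) := by
  simp only [exp_neg_weightedSumSquares]
  exact Integrable.fintype_prod (μ := fun _ : ι => (volume : Measure ℝ))
    (f := fun k t => Real.exp (-a k * t ^ 2)) fun k => integrable_exp_neg_mul_sq (ha k)

theorem integral_exp_neg_weightedSumSquares (a : ι → ℝ) :
    ∫ x, Real.exp (-weightedSumSquares ℝ a x) = ∏ k, √(π / a k) := by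
  simp only [exp_neg_weightedSumSquares, ← integral_gaussian]
  exact integral_fintype_prod_volume_eq_prod fun k t => Real.exp (-a k * t ^ 2)

theorem weightedSumSquares_nonneg (ha : ∀ k, 0 ≤ a k) (x : ι → ℝ) :
    0 ≤ weightedSumSquares ℝ a x := by
  rw [weightedSumSquares_apply]
  exact Finset.sum_nonneg fun k _ => mul_nonneg (ha k) (mul_self_nonneg _)

theorem continuous_weightedSumSquares (a : ι → ℝ) : Continuous (weightedSumSquares ℝ a) := by
  rw [funext (weightedSumSquares_apply a)]
  fun_prop

theorem weightedSumSquares_update_neg [DecidableEq ι] (a x : ι → ℝ) (k : ι) :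
    weightedSumSquares ℝ a (Function.update x k (-x k)) = weightedSumSquares ℝ a x := by
  simp only [weightedSumSquares_apply]
  refine Finset.sum_congr rfl fun j _ => ?_
  obtain rfl | hj := eq_or_ne j k
  · rw [Function.update_self, neg_mul_neg]
  · rw [Function.update_of_ne hj]

theorem norm_sq_le_mul_weightedSumSquares (ha : ∀ k, 0 < a k) (x : ι → ℝ) :
    ‖x‖ ^ 2 ≤ (∑ k, (a k)⁻¹) * weightedSumSquares ℝ a x := by
  have hinv : ∀ k, 0 ≤ (a k)⁻¹ := fun k => (inv_pos.2 (ha k)).le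
  have hterm : ∀ k, 0 ≤ a k * (x k * x k) := fun k => mul_nonneg (ha k).le (mul_self_nonneg _)
  rw [weightedSumSquares_apply]
  simp only [smul_eq_mul]
  have hcoord : ∀ k, x k ^ 2 ≤ (∑ j, (a j)⁻¹) * ∑ j, a j * (x j * x j) := fun k => by
    calc x k ^ 2 = (a k)⁻¹ * (a k * (x k * x k)) := by
          rw [inv_mul_cancel_left₀ (ha k).ne', sq]
      _ ≤ (∑ j, (a j)⁻¹) * ∑ j, a j * (x j * x j) :=
          mul_le_mul (Finset.single_le_sum (fun j _ => hinv j) (Finset.mem_univ k))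
            (Finset.single_le_sum (fun j _ => hterm j) (Finset.mem_univ k)) (hterm k)
            (Finset.sum_nonneg fun j _ => hinv j)
  have hnonneg := mul_nonneg (Finset.sum_nonneg fun j (_ : j ∈ Finset.univ) => hinv j)
    (Finset.sum_nonneg fun j (_ : j ∈ Finset.univ) => hterm j)
  rw [← Real.le_sqrt (norm_nonneg x) hnonneg, pi_norm_le_iff_of_nonneg (Real.sqrt_nonneg _)]
  exact fun k => Real.abs_le_sqrt (hcoord k)

theorem isLittleO_norm_pow_three_weightedSumSquares (ha : ∀ k, 0 < a k) :
    (fun x : ι → ℝ => ‖x‖ ^ 3) =o[𝓝 0] weightedSumSquares ℝ a := by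
  have hsq : (fun x : ι → ℝ => ‖x‖ ^ 2) =O[𝓝 0] weightedSumSquares ℝ a := by
    refine .of_bound (∑ k, (a k)⁻¹) (Eventually.of_forall fun x => ?_)
    rw [norm_pow, norm_norm, Real.norm_of_nonneg (weightedSumSquares_nonneg (fun k => (ha k).le) x)]
    exact norm_sq_le_mul_weightedSumSquares ha x
  exact ((Asymptotics.isLittleO_pow_pow (by norm_num : 2 < 3)).comp_tendsto
    tendsto_norm_zero).trans_isBigO hsq

end WeightedSumSquares

section CharSum

variable {ι : Type*} [Fintype ι] {S : Finset (ι → ℤ)} {w : (ι → ℤ) → ℝ} {b : ι → ℝ}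

open QuadraticMap (weightedSumSquares weightedSumSquares_apply)

/-- The Laurent polynomial `S(z) = ∑ w_i z^i` of a weighted step set at the point
`z = (e^{iθ_j})_j` of the unit torus; up to normalisation, the characteristic function of a step. -/
def charSum (S : Finset (ι → ℤ)) (w : (ι → ℤ) → ℝ) (θ : ι → ℝ) : ℂ :=
  ∑ i ∈ S, (w i : ℂ) * Complex.exp ((∑ j, i j * θ j : ℝ) * Complex.I)

theorem continuous_charSum : Continuous (charSum S w) := by
  unfold charSum
  fun_prop

theorem isBigO_cexp_mul_I_sub :
    (fun u : ℝ => Complex.exp (u * Complex.I) - (1 + u * Complex.I - u ^ 2 / 2)) =O[𝓝 0]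
      fun u => u ^ 3 := by
  have hlim : Tendsto (fun u : ℝ => (u : ℂ) * Complex.I) (𝓝 0) (𝓝 0) :=
    Continuous.tendsto' (by fun_prop) _ _ (by simp)
  refine ((Complex.exp_sub_sum_range_isBigO_pow 3).comp_tendsto hlim).congr_left (fun u => ?_)
    |>.trans (Asymptotics.isBigO_of_le _ fun u => ?_)
  · simp only [Function.comp_apply, Finset.sum_range_succ, Finset.sum_range_zero, mul_pow,
      Complex.I_sq, Nat.factorial]
    push_cast
    ring
  · simp

theorem isBigO_dot (c : ι → ℝ) : (fun θ : ι → ℝ => ∑ j, c j * θ j) =O[𝓝 0] fun θ => ‖θ‖ :=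
  Asymptotics.IsBigO.fun_sum fun j _ =>
    (Asymptotics.isBigO_of_le _ fun θ => by
      simpa only [norm_norm] using norm_le_pi_norm θ j).const_mul_left (c j)

theorem sum_mul_dot_eq_zero (hdrift : ∀ k, ∑ i ∈ S, w i * i k = 0) (θ : ι → ℝ) :
    ∑ i ∈ S, w i * ∑ j, i j * θ j = 0 := by
  calc ∑ i ∈ S, w i * ∑ j, i j * θ j = ∑ j, (∑ i ∈ S, w i * i j) * θ j := by
        simp only [Finset.mul_sum, Finset.sum_mul, ← mul_assoc]
        exact Finset.sum_comm
    _ = 0 := by simp only [hdrift, zero_mul, Finset.sum_const_zero]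

theorem sum_mul_dot_sq (hcov : ∀ k l, k ≠ l → ∑ i ∈ S, w i * (i k * i l) = 0)
    (hvar : ∀ k, ∑ i ∈ S, w i * i k ^ 2 = 2 * b k) (θ : ι → ℝ) :
    ∑ i ∈ S, w i * (∑ j, i j * θ j) ^ 2 = 2 * weightedSumSquares ℝ b θ := by
  calc ∑ i ∈ S, w i * (∑ j, i j * θ j) ^ 2
      = ∑ k, ∑ l, (∑ i ∈ S, w i * (i k * i l)) * (θ k * θ l) := by
        simp only [pow_two, Finset.mul_sum, Finset.sum_mul]
        rw [Finset.sum_comm]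
        refine Finset.sum_congr rfl fun k _ => ?_
        rw [Finset.sum_comm]
        exact Finset.sum_congr rfl fun l _ => Finset.sum_congr rfl fun i _ => by ring
    _ = ∑ k, (∑ i ∈ S, w i * i k ^ 2) * (θ k * θ k) := by
        refine Finset.sum_congr rfl fun k _ => ?_
        rw [Finset.sum_eq_single k (fun l _ hl => by rw [hcov k l hl.symm, zero_mul]) (by simp)]
        simp only [pow_two]
    _ = 2 * weightedSumSquares ℝ b θ := by
        simp only [hvar, weightedSumSquares_apply, smul_eq_mul, Finset.mul_sum, mul_assoc]

theorem isBigO_charSum_sub (hdrift : ∀ k, ∑ i ∈ S, w i * i k = 0)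
    (hcov : ∀ k l, k ≠ l → ∑ i ∈ S, w i * (i k * i l) = 0)
    (hvar : ∀ k, ∑ i ∈ S, w i * i k ^ 2 = 2 * b k) :
    (fun θ => charSum S w θ - (∑ i ∈ S, w i - weightedSumSquares ℝ b θ : ℝ)) =O[𝓝 0]
      fun θ => ‖θ‖ ^ 3 := by
  have hterm : ∀ i ∈ S, (fun θ : ι → ℝ => (w i : ℂ) *
      (Complex.exp ((∑ j, i j * θ j : ℝ) * Complex.I) -
        (1 + (∑ j, i j * θ j : ℝ) * Complex.I - (∑ j, i j * θ j : ℝ) ^ 2 / 2))) =O[𝓝 0]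
      fun θ => ‖θ‖ ^ 3 := fun i _ => by
    have hlim : Tendsto (fun θ : ι → ℝ => ∑ j, i j * θ j) (𝓝 0) (𝓝 0) :=
      (isBigO_dot fun j => (i j : ℝ)).trans_tendsto tendsto_norm_zero
    exact ((isBigO_cexp_mul_I_sub.comp_tendsto hlim).trans
      ((isBigO_dot fun j => (i j : ℝ)).pow 3)).const_mul_left _
  refine (Asymptotics.IsBigO.fun_sum hterm).congr_left fun θ => ?_
  have h₁ : ∑ i ∈ S, (w i : ℂ) * (∑ j, i j * θ j : ℝ) = 0 := by
    exact_mod_cast sum_mul_dot_eq_zero hdrift θ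
  have h₂ : ∑ i ∈ S, (w i : ℂ) * (∑ j, i j * θ j : ℝ) ^ 2 = 2 * weightedSumSquares ℝ b θ := by
    exact_mod_cast sum_mul_dot_sq hcov hvar θ
  simp only [mul_sub, mul_add, mul_one, ← mul_assoc, ← mul_div_assoc, Finset.sum_sub_distrib,
    Finset.sum_add_distrib, ← Finset.sum_mul, ← Finset.sum_div, h₁, h₂, charSum]
  push_cast
  ring

theorem isLittleO_inv_mul_charSum_sub (hS : 0 < ∑ i ∈ S, w i) (hb : ∀ k, 0 < b k)
    (hdrift : ∀ k, ∑ i ∈ S, w i * i k = 0)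
    (hcov : ∀ k l, k ≠ l → ∑ i ∈ S, w i * (i k * i l) = 0)
    (hvar : ∀ k, ∑ i ∈ S, w i * i k ^ 2 = 2 * b k) :
    (fun θ => ((∑ i ∈ S, w i : ℝ) : ℂ)⁻¹ * charSum S w θ -
        (1 - weightedSumSquares ℝ (fun k => b k / ∑ i ∈ S, w i) θ)) =o[𝓝 0]
      weightedSumSquares ℝ (fun k => b k / ∑ i ∈ S, w i) := by
  have hS' : ((∑ i ∈ S, w i : ℝ) : ℂ) ≠ 0 := Complex.ofReal_ne_zero.2 hS.ne'
  have hscale : ∀ θ, weightedSumSquares ℝ (fun k => b k / ∑ i ∈ S, w i) θ =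
      (∑ i ∈ S, w i)⁻¹ * weightedSumSquares ℝ b θ := fun θ => by
    simp only [weightedSumSquares_apply, smul_eq_mul, Finset.mul_sum, div_eq_inv_mul, mul_assoc]
  have hexp := (isBigO_charSum_sub hdrift hcov hvar).const_mul_left
    ((∑ i ∈ S, w i : ℝ) : ℂ)⁻¹
  refine (hexp.congr_left fun θ => ?_).trans_isLittleO
    (isLittleO_norm_pow_three_weightedSumSquares fun k => div_pos (hb k) hS)
  rw [hscale, Complex.ofReal_sub, Complex.ofReal_mul, Complex.ofReal_inv, mul_sub, mul_sub,
    inv_mul_cancel₀ hS']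

end CharSum

section Moments

theorem sum_mul_eq_zero_of_odd {d : ℕ} {S : Finset (Fin d → ℤ)} {w : (Fin d → ℤ) → ℝ} {k : Fin d}
    (hk : SymmetricAxis d S w k) {g : (Fin d → ℤ) → ℝ}
    (hg : ∀ i, g (Function.update i k (-(i k))) = -g i) : ∑ i ∈ S, w i * g i = 0 := by
  refine Finset.sum_involution (fun i _ => Function.update i k (-(i k)))
    (fun i hi => ?_) (fun i _ hne heq => hne ?_) (fun i hi => (hk i hi).1) (fun i _ => by simp)
  · rw [(hk i hi).2, hg, mul_neg, add_neg_cancel]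
  · rw [self_eq_neg.1 ((congrArg g heq).symm.trans (hg i)), mul_zero]

variable {α : Type*} {S : Finset α} {w : α → ℝ} {g : α → ℤ}

theorem sum_mul_intCast_eq_sub (hg : ∀ i ∈ S, g i = -1 ∨ g i = 0 ∨ g i = 1) :
    ∑ i ∈ S, w i * g i = ∑ i ∈ S with g i = 1, w i - ∑ i ∈ S with g i = -1, w i := by
  rw [Finset.sum_filter, Finset.sum_filter, ← Finset.sum_sub_distrib]
  refine Finset.sum_congr rfl fun i hi => ?_
  rcases hg i hi with h | h | h <;> simp [h]

theorem sum_mul_intCast_sq_eq_add (hg : ∀ i ∈ S, g i = -1 ∨ g i = 0 ∨ g i = 1) :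
    ∑ i ∈ S, w i * g i ^ 2 = ∑ i ∈ S with g i = 1, w i + ∑ i ∈ S with g i = -1, w i := by
  rw [Finset.sum_filter, Finset.sum_filter, ← Finset.sum_add_distrib]
  refine Finset.sum_congr rfl fun i hi => ?_
  rcases hg i hi with h | h | h <;> simp [h]

theorem sum_mul_intCast_sq_eq_two_mul (hg : ∀ i ∈ S, g i = -1 ∨ g i = 0 ∨ g i = 1)
    (hzero : ∑ i ∈ S, w i * g i = 0) :
    ∑ i ∈ S, w i * g i ^ 2 = 2 * ∑ i ∈ S with g i = 1, w i := by
  rw [sum_mul_intCast_eq_sub hg, sub_eq_zero] at hzero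
  rw [sum_mul_intCast_sq_eq_add hg, ← hzero, two_mul]

variable {d : ℕ} {S : Finset (Fin (d + 1) → ℤ)} {w : (Fin (d + 1) → ℤ) → ℝ}

theorem sum_mul_coord_eq_zero (hlast : ∑ i ∈ S, w i * i (Fin.last d) = 0)
    (hsym : ∀ k : Fin d, SymmetricAxis (d + 1) S w (Fin.castSucc k)) (k : Fin (d + 1)) :
    ∑ i ∈ S, w i * i k = 0 := by
  induction k using Fin.lastCases with
  | cast k => exact sum_mul_eq_zero_of_odd (hsym k) fun i => by simp
  | last => exact hlast

theorem sum_mul_coord_mul_coord_eq_zero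
    (hsym : ∀ k : Fin d, SymmetricAxis (d + 1) S w (Fin.castSucc k)) (k l : Fin (d + 1))
    (hkl : k ≠ l) : ∑ i ∈ S, w i * (i k * i l) = 0 := by
  induction k using Fin.lastCases with
  | cast k => exact sum_mul_eq_zero_of_odd (hsym k) fun i => by simp [hkl.symm]
  | last =>
    induction l using Fin.lastCases with
    | cast l => exact sum_mul_eq_zero_of_odd (hsym l) fun i => by simp [hkl]
    | last => exact absurd rfl hkl

end Moments

theorem tendsto_natCast_rpow_neg {β : ℝ} (hβ : 0 < β) :
    Tendsto (fun n : ℕ => (n : ℝ) ^ (-β)) atTop (𝓝 0) :=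
  (tendsto_rpow_neg_atTop hβ).comp tendsto_natCast_atTop_atTop

theorem tendsto_sqrt_mul_natCast_rpow_neg {β : ℝ} (hβ : β < 1 / 2) :
    Tendsto (fun n : ℕ => √n * (n : ℝ) ^ (-β)) atTop atTop := by
  refine ((tendsto_rpow_atTop (sub_pos.2 hβ)).comp tendsto_natCast_atTop_atTop).congr' ?_
  filter_upwards [eventually_gt_atTop 0] with n hn
  rw [Function.comp_apply, sub_eq_add_neg, Real.rpow_add (Nat.cast_pos.2 hn), Real.sqrt_eq_rpow]

namespace ZeroDrift

variable {d : ℕ} {S : Finset (Fin (d + 1) → ℤ)} {w : (Fin (d + 1) → ℤ) → ℝ}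
  {b : Fin (d + 1) → ℝ}

open QuadraticMap (weightedSumSquares)

theorem box_zero_eq_ball (d : ℕ) (δ : ℝ) :
    box d (fun _ => 0) δ = Metric.ball (0 : Fin (d + 1) → ℝ) δ := by
  simp [box, argOf, ball_pi', Real.ball_eq_Ioo]

theorem SbarC_exp_eq_charSum (θ : Fin (d + 1) → ℝ) :
    SbarC d S w (fun j => Complex.exp (Complex.I * θ j)) =
      charSum S w (Function.update θ (Fin.last d) (-θ (Fin.last d))) := by
  refine Finset.sum_congr rfl fun i _ => ?_
  simp only [← Complex.exp_int_mul, ← Complex.exp_sum, mul_assoc, ← Complex.exp_add]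
  congr 2
  simp only [Fin.sum_univ_castSucc, Function.update_self,
    Function.update_of_ne (Fin.castSucc_ne_last _)]
  push_cast
  rw [add_mul, Finset.sum_mul]
  congr 1
  · exact Finset.sum_congr rfl fun j _ => by ring
  · ring

theorem tendsto_setIntegral_ball_SbarC_pow (hS : 0 < S1 d S w) (hb : ∀ k, 0 < b k)
    (hdrift : ∀ k, ∑ i ∈ S, w i * i k = 0)
    (hcov : ∀ k l, k ≠ l → ∑ i ∈ S, w i * (i k * i l) = 0)
    (hvar : ∀ k, ∑ i ∈ S, w i * i k ^ 2 = 2 * b k)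
    {r : ℕ → ℝ} (hr : Tendsto r atTop (𝓝 0)) (hr' : Tendsto (fun n : ℕ => √n * r n) atTop atTop) :
    Tendsto (fun n : ℕ => √n ^ (d + 1) • ∫ θ in Metric.ball (0 : Fin (d + 1) → ℝ) (r n),
        ((S1 d S w : ℂ)⁻¹ * SbarC d S w (fun j => Complex.exp (Complex.I * θ j))) ^ n) atTop
      (𝓝 (∏ k, √(π / (b k / S1 d S w)) : ℝ)) := by
  set a : Fin (d + 1) → ℝ := fun k => b k / S1 d S w
  have ha : ∀ k, 0 < a k := fun k => div_pos (hb k) hS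
  set reflect : (Fin (d + 1) → ℝ) → Fin (d + 1) → ℝ :=
    fun θ => Function.update θ (Fin.last d) (-θ (Fin.last d))
  have hreflect : Continuous reflect := by fun_prop
  have hreflect₀ : Tendsto reflect (𝓝 0) (𝓝 0) := hreflect.tendsto' _ _ (by simp [reflect])
  have hmeas : Measurable fun θ => (S1 d S w : ℂ)⁻¹ * charSum S w (reflect θ) :=
    (continuous_const.mul (continuous_charSum.comp hreflect)).measurable
  have hexp₀ : (fun θ => (S1 d S w : ℂ)⁻¹ * charSum S w θ - (1 - weightedSumSquares ℝ a θ))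
      =o[𝓝 0] weightedSumSquares ℝ a :=
    isLittleO_inv_mul_charSum_sub hS hb hdrift hcov hvar
  have hexp : (fun θ => (S1 d S w : ℂ)⁻¹ * charSum S w (reflect θ) -
      (1 - weightedSumSquares ℝ a θ)) =o[𝓝 0] weightedSumSquares ℝ a :=
    (hexp₀.comp_tendsto hreflect₀).congr
      (fun θ => by simp only [Function.comp_apply, reflect, weightedSumSquares_update_neg])
      fun θ => weightedSumSquares_update_neg a θ (Fin.last d)
  have h := tendsto_sqrt_pow_smul_setIntegral_ball_pow (μ := volume)
    (weightedSumSquares_nonneg fun k => (ha k).le)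
    ((continuous_weightedSumSquares a).tendsto' _ _ (map_zero _))
    (integrable_exp_neg_weightedSumSquares ha) hmeas hexp hr hr'
  simpa only [Module.finrank_fin_fun, integral_exp_neg_weightedSumSquares,
    SbarC_exp_eq_charSum] using h

end ZeroDrift

theorem inv_pi_pow_mul_prod_sqrt {ι : Type*} [Fintype ι] {b : ι → ℝ} (hb : ∀ k, 0 ≤ b k) {s : ℝ}
    (hs : 0 ≤ s) :
    (π ^ Fintype.card ι)⁻¹ * ∏ k, √(π / (b k / s)) =
      s ^ ((Fintype.card ι : ℝ) / 2) / (π ^ ((Fintype.card ι : ℝ) / 2) * √(∏ k, b k)) := by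
  have hsqrt : ∀ k, √(π / (b k / s)) = √π * √s / √(b k) := fun k => by
    rw [div_div_eq_mul_div, Real.sqrt_div (mul_nonneg Real.pi_pos.le hs),
      Real.sqrt_mul Real.pi_pos.le]
  have hπ : (π : ℝ) ^ Fintype.card ι = √π ^ Fintype.card ι * √π ^ Fintype.card ι := by
    rw [← mul_pow, Real.mul_self_sqrt Real.pi_pos.le]
  simp only [hsqrt]
  rw [Finset.prod_div_distrib, Finset.prod_const, Finset.card_univ, mul_pow, hπ,
    Real.sqrt_prod _ fun k _ => hb k, Real.rpow_div_two_eq_sqrt _ hs,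
    Real.rpow_div_two_eq_sqrt _ Real.pi_pos.le, Real.rpow_natCast, Real.rpow_natCast]
  field_simp

theorem gaussian_asymptotics_general
    {d : ℕ} {S : Finset (Fin (d + 1) → ℤ)} {w : (Fin (d + 1) → ℤ) → ℝ} {b : Fin (d + 1) → ℝ}
    (hS : 0 < ZeroDrift.S1 d S w) (hb : ∀ k, 0 < b k)
    (hdrift : ∀ k, ∑ i ∈ S, w i * i k = 0)
    (hcov : ∀ k l, k ≠ l → ∑ i ∈ S, w i * (i k * i l) = 0)
    (hvar : ∀ k, ∑ i ∈ S, w i * i k ^ 2 = 2 * b k)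
    {r : ℕ → ℝ} (hr : Tendsto r atTop (𝓝 0)) (hr' : Tendsto (fun n : ℕ => √n * r n) atTop atTop) :
    Tendsto (fun n : ℕ =>
      ((((π : ℝ) ^ (d + 1))⁻¹ : ℝ) •
          ∫ θ in ZeroDrift.box d (fun _ => 0) (r n),
            ZeroDrift.SbarC d S w (fun j => Complex.exp (Complex.I * θ j)) ^ n) /
        ((ZeroDrift.S1 d S w ^ n * (n : ℝ) ^ (-((d : ℝ) + 1) / 2) *
            (ZeroDrift.S1 d S w ^ (((d : ℝ) + 1) / 2) /
              ((π : ℝ) ^ (((d : ℝ) + 1) / 2) * √(∏ k, b k))) : ℝ) : ℂ))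
      atTop (𝓝 1) := by
  have hG : 0 < ∏ k, √(π / (b k / ZeroDrift.S1 d S w)) :=
    Finset.prod_pos fun k _ => Real.sqrt_pos.2 (div_pos Real.pi_pos (div_pos (hb k) hS))
  have hconst := inv_pi_pow_mul_prod_sqrt (fun k => (hb k).le) hS.le
  rw [Fintype.card_fin, Nat.cast_succ] at hconst
  have hsqrt : ∀ n : ℕ, (n : ℝ) ^ (-((d : ℝ) + 1) / 2) = (√n ^ (d + 1))⁻¹ := fun n => by
    rw [Real.rpow_div_two_eq_sqrt _ n.cast_nonneg, Real.rpow_neg (Real.sqrt_nonneg _),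
      ← Nat.cast_succ, Real.rpow_natCast]
  have hlim := (ZeroDrift.tendsto_setIntegral_ball_SbarC_pow hS hb hdrift hcov hvar hr
    hr').div_const ((∏ k, √(π / (b k / ZeroDrift.S1 d S w)) : ℝ) : ℂ)
  rw [div_self (Complex.ofReal_ne_zero.2 hG.ne')] at hlim
  refine hlim.congr fun n => ?_
  rw [ZeroDrift.box_zero_eq_ball, hsqrt, ← hconst]
  simp only [mul_pow, inv_pow, integral_const_mul, Complex.real_smul]
  push_cast
  field_simp

/-- Proposition (Gaussian asymptotics): with `δ = n^{-β}`, `1/3 < β < 1/2`,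
`π^{-(d+1)} ∫_{(-δ,δ)^{d+1}} S̄(e^{iθ})^n dθ ∼ S(1)^n n^{-(d+1)/2} S(1)^{(d+1)/2}/(π^{(d+1)/2}(b_1⋯b_{d+1})^{1/2})`. -/
theorem gaussian_asymptotics
    (d : ℕ) (S : Finset (Fin (d + 1) → ℤ)) (w : (Fin (d + 1) → ℤ) → ℝ)
    (hstep : ∀ i ∈ S, (∀ j, i j = -1 ∨ i j = 0 ∨ i j = 1) ∧ i ≠ 0)
    (hw : ∀ i ∈ S, 0 < w i)
    (hsym : ∀ k : Fin d, SymmetricAxis (d + 1) S w (Fin.castSucc k))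
    (hfwd : ∀ k : Fin (d + 1), ∃ i ∈ S, i k = 1)
    (hbwd : ∀ k : Fin (d + 1), ∃ i ∈ S, i k = -1)
    (hzero : (∑ i ∈ S.filter fun i => i (Fin.last d) = -1, w i)
        = ∑ i ∈ S.filter fun i => i (Fin.last d) = 1, w i)
    (β : ℝ) (hβ1 : 1 / 3 < β) (hβ2 : β < 1 / 2) :
    Tendsto (fun n : ℕ =>
      ((((π : ℝ) ^ (d + 1))⁻¹ : ℝ) •
          ∫ θ in ZeroDrift.box d (fun _ => 0) ((n : ℝ) ^ (-β)),
            ZeroDrift.SbarC d S w (fun j => Complex.exp (Complex.I * θ j)) ^ n) /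
        ((ZeroDrift.S1 d S w ^ n * (n : ℝ) ^ (-((d : ℝ) + 1) / 2) *
            (ZeroDrift.S1 d S w ^ (((d : ℝ) + 1) / 2) /
              ((π : ℝ) ^ (((d : ℝ) + 1) / 2) *
                Real.sqrt (∏ k : Fin (d + 1),
                  ∑ i ∈ S.filter fun i => i k = 1, w i))) : ℝ) : ℂ))
      atTop (nhds 1) := by
  have hlast : ∑ i ∈ S, w i * i (Fin.last d) = 0 := by
    rw [sum_mul_intCast_eq_sub fun i hi => (hstep i hi).1 _, hzero, sub_self]
  have hdrift := sum_mul_coord_eq_zero hlast hsym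
  exact gaussian_asymptotics_general (Finset.sum_pos hw ((hfwd 0).imp fun _ h => h.1))
    (fun k => Finset.sum_pos (fun i hi => hw i (Finset.mem_filter.1 hi).1)
      ((hfwd k).imp fun _ h => Finset.mem_filter.2 h)) hdrift
    (sum_mul_coord_mul_coord_eq_zero hsym)
    (fun k => sum_mul_intCast_sq_eq_two_mul (fun i hi => (hstep i hi).1 k) (hdrift k))
    (tendsto_natCast_rpow_neg (by linarith)) (tendsto_sqrt_mul_natCast_rpow_neg hβ2)

end
end

section
/- (Proposition: other points are negligible) With the zero-drift mostly symmetric setup and running assumptions ε = n^{-α}, δ = n^{-β} (1/2 < α < 2β, α + β > 1, 1/3 < β < 1/2), for every w ∈ Γ with w ≠ (1,…,1), the integral ∫_{N_w} [(1+z_1)···(1+z_{d-1}) / (B(ẑ) · z_1···z_d)] · [(B(ẑ) - z_d^2 A(ẑ)) / (1 - z_d)] · S̄(z)^n dz is o(S(1)^n n^{-d/2}) as n → ∞. -/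
open Finset Filter MeasureTheory
open scoped Classical Real

noncomputable section

/-!
At a point `w ∈ Γ` all monomials of `S` have the same phase, so near `w` the modulus of `S̄` is that
of an exponential sum with positive weights. As no hyperplane contains all steps, such a sum loses
a quadratic amount in the angular distance `φ` to `w`; zero drift removes the linear term in `ε`
from the total weight. Hence `|S̄|^n ≤ S(1)^n exp (4 n ε² - κ n |φ|²)`, and integrating the
Gaussian gives the order `S(1)^n n^{-(d+1)/2}`.

It remains to see that the other factors are `O((ε² + δ²) / ε)`. Equality of phases together with
`A(1) = B(1)` makes `B - z_{d+1}² A` vanish at `w`. If `w ≠ (1,…,1)`, then either some factor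
`1 + z_j` vanishes at `w` as well, compensating `|1 - z_{d+1}|⁻¹ ≤ 1 / ε`, or `1 - z_{d+1}` stays
away from `0`.
-/

open Asymptotics
open scoped Topology

section WeightedSums

variable {ι E : Type*} [NormedAddCommGroup E] [InnerProductSpace ℝ E]

theorem norm_sum_smul_sq_add_sum_sum (s : Finset ι) (p : ι → ℝ) (u : ι → E) :
    ‖∑ i ∈ s, p i • u i‖ ^ 2 + (∑ i ∈ s, ∑ k ∈ s, p i * p k * ‖u i - u k‖ ^ 2) / 2
      = (∑ i ∈ s, p i) * ∑ i ∈ s, p i * ‖u i‖ ^ 2 := by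
  have hpair (i k : ι) : p i * p k * ‖u i - u k‖ ^ 2 = p i * ‖u i‖ ^ 2 * p k
      - 2 * inner ℝ (p i • u i) (p k • u k) + p i * (p k * ‖u k‖ ^ 2) := by
    rw [norm_sub_sq_real, real_inner_smul_left, real_inner_smul_right]
    ring
  simp only [hpair, sum_add_distrib, sum_sub_distrib, ← mul_sum, ← sum_mul, ← inner_sum,
    ← sum_inner, real_inner_self_eq_norm_sq]
  ring

theorem norm_sum_smul_sq_add_le {s : Finset ι} {p : ι → ℝ} {u : ι → E}
    (hp : ∀ i ∈ s, 0 ≤ p i) (hu : ∀ i ∈ s, ‖u i‖ = 1) {i k : ι} (hi : i ∈ s) (hk : k ∈ s) :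
    ‖∑ i ∈ s, p i • u i‖ ^ 2 + p i * p k * ‖u i - u k‖ ^ 2 / 2 ≤ (∑ i ∈ s, p i) ^ 2 := by
  have hterm : ∀ a ∈ s, ∀ b ∈ s, 0 ≤ p a * p b * ‖u a - u b‖ ^ 2 := fun a ha b hb =>
    mul_nonneg (mul_nonneg (hp a ha) (hp b hb)) (sq_nonneg _)
  have hpair : p i * p k * ‖u i - u k‖ ^ 2 ≤ ∑ a ∈ s, ∑ b ∈ s, p a * p b * ‖u a - u b‖ ^ 2 :=
    (single_le_sum (f := fun b => p i * p b * ‖u i - u b‖ ^ 2) (hterm i hi) hk).trans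
      (single_le_sum (f := fun a => ∑ b ∈ s, p a * p b * ‖u a - u b‖ ^ 2)
        (fun a ha => sum_nonneg (hterm a ha)) hi)
  have hunit : ∑ a ∈ s, p a * ‖u a‖ ^ 2 = ∑ a ∈ s, p a :=
    sum_congr rfl fun a ha => by rw [hu a ha, one_pow, mul_one]
  have hid := norm_sum_smul_sq_add_sum_sum s p u
  rw [hunit] at hid
  linarith

theorem eq_of_norm_sum_smul_eq_sum {s : Finset ι} {p : ι → ℝ} {u : ι → E}
    (hp : ∀ i ∈ s, 0 < p i) (hu : ∀ i ∈ s, ‖u i‖ = 1)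
    (h : ‖∑ i ∈ s, p i • u i‖ = ∑ i ∈ s, p i) {i k : ι} (hi : i ∈ s) (hk : k ∈ s) :
    u i = u k := by
  have hle := norm_sum_smul_sq_add_le (fun a ha => (hp a ha).le) hu hi hk
  rw [h] at hle
  by_contra hne
  have hpos : 0 < p i * p k * ‖u i - u k‖ ^ 2 :=
    mul_pos (mul_pos (hp i hi) (hp k hk)) (pow_pos (norm_pos_iff.mpr (sub_ne_zero.mpr hne)) 2)
  linarith

end WeightedSums

section ExponentialSums

theorem two_div_pi_mul_abs_sub_le_norm_exp_sub_exp {x y : ℝ} (h : |x - y| < π) :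
    2 / π * |x - y| ≤ ‖Complex.exp (x * Complex.I) - Complex.exp (y * Complex.I)‖ := by
  have hangle := Complex.mul_angle_le_norm_sub (Complex.norm_exp_ofReal_mul_I x)
    (Complex.norm_exp_ofReal_mul_I y)
  have hmem : x - y ∈ Set.Ioc (-π) (-π + 2 * π) := by
    constructor <;> linarith [abs_lt.mp h]
  rwa [Complex.angle_exp_exp, (toIocMod_eq_self Real.two_pi_pos).mpr hmem] at hangle

variable {ι : Type*}

theorem norm_sum_mul_exp_sq_add_le {s : Finset ι} {p : ι → ℝ} {μ : ℝ} (hμ : 0 ≤ μ)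
    (hp : ∀ i ∈ s, μ ≤ p i) (a : ι → ℝ) {i k : ι} (hi : i ∈ s) (hk : k ∈ s)
    (hik : |a i - a k| < π) :
    ‖∑ i ∈ s, (p i : ℂ) * Complex.exp (a i * Complex.I)‖ ^ 2
      + 2 * (μ / π) ^ 2 * (a i - a k) ^ 2 ≤ (∑ i ∈ s, p i) ^ 2 := by
  have hpair := norm_sum_smul_sq_add_le (u := fun i => Complex.exp (a i * Complex.I))
    (fun i hi => hμ.trans (hp i hi)) (fun i _ => Complex.norm_exp_ofReal_mul_I (a i)) hi hk
  have hweight : μ ^ 2 ≤ p i * p k := by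
    rw [sq]
    exact mul_le_mul (hp i hi) (hp k hk) hμ (hμ.trans (hp i hi))
  have hchord : (2 / π) ^ 2 * (a i - a k) ^ 2
      ≤ ‖Complex.exp (a i * Complex.I) - Complex.exp (a k * Complex.I)‖ ^ 2 := by
    rw [← sq_abs (a i - a k), ← mul_pow]
    exact pow_le_pow_left₀ (by positivity) (two_div_pi_mul_abs_sub_le_norm_exp_sub_exp hik) 2
  have hmul := mul_le_mul hweight hchord (by positivity) ((sq_nonneg μ).trans hweight)
  simp only [Complex.real_smul] at hpair
  calc _ = ‖∑ i ∈ s, (p i : ℂ) * Complex.exp (a i * Complex.I)‖ ^ 2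
        + μ ^ 2 * ((2 / π) ^ 2 * (a i - a k) ^ 2) / 2 := by ring
    _ ≤ _ := by linarith

variable {E : Type*} [NormedAddCommGroup E] [NormedSpace ℝ E]

theorem exists_norm_le_mul_of_abs_sub_le [FiniteDimensional ℝ E] (s : Finset ι)
    (L : ι → E →L[ℝ] ℝ) (hL : ∀ x, (∀ i ∈ s, ∀ k ∈ s, L i x = L k x) → x = 0) :
    ∃ K > 0, ∀ (x : E) (t : ℝ), 0 ≤ t → (∀ i ∈ s, ∀ k ∈ s, |L i x - L k x| ≤ t) →
      ‖x‖ ≤ K * t := by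
  let F : E →ₗ[ℝ] s × s → ℝ := LinearMap.pi fun q => ((L q.1 - L q.2 : E →L[ℝ] ℝ) : E →ₗ[ℝ] ℝ)
  have hF : F.ker = ⊥ := by
    refine LinearMap.ker_eq_bot'.mpr fun x hx => hL x fun i hi k hk => ?_
    exact sub_eq_zero.mp (congrFun hx (⟨i, hi⟩, ⟨k, hk⟩))
  obtain ⟨K, hK, hanti⟩ := F.exists_antilipschitzWith hF
  refine ⟨K, hK, fun x t ht hx => (ZeroHomClass.bound_of_antilipschitz F hanti x).trans ?_⟩
  gcongr
  exact (pi_norm_le_iff_of_nonneg ht).mpr fun q => hx q.1 q.1.2 q.2 q.2.2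

theorem exists_eventually_norm_sum_mul_exp_sq_le [FiniteDimensional ℝ E] (s : Finset ι)
    (L : ι → E →L[ℝ] ℝ) (hL : ∀ x, (∀ i ∈ s, ∀ k ∈ s, L i x = L k x) → x = 0)
    {μ : ℝ} (hμ : 0 < μ) :
    ∃ c > 0, ∀ᶠ x in 𝓝 (0 : E), ∀ p : ι → ℝ, (∀ i ∈ s, μ ≤ p i) →
      ‖∑ i ∈ s, (p i : ℂ) * Complex.exp (L i x * Complex.I)‖ ^ 2 + c * ‖x‖ ^ 2
        ≤ (∑ i ∈ s, p i) ^ 2 := by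
  obtain ⟨K, hK, hbound⟩ := exists_norm_le_mul_of_abs_sub_le s L hL
  have hnear : ∀ᶠ x in 𝓝 (0 : E), ∀ i ∈ s, ∀ k ∈ s, |L i x - L k x| < π := by
    refine (eventually_all_finset s).mpr fun i _ => (eventually_all_finset s).mpr fun k _ => ?_
    have hcont : ContinuousAt (fun x => |L i x - L k x|) 0 := by fun_prop
    exact hcont.eventually_lt continuousAt_const (by simpa using Real.pi_pos)
  refine ⟨2 * (μ / π) ^ 2 / K ^ 2, by positivity, hnear.mono fun x hx p hp => ?_⟩
  have hpair := fun i hi k hk =>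
    norm_sum_mul_exp_sq_add_le hμ.le hp (fun i => L i x) hi hk (hx i hi k hk)
  set Z := ‖∑ i ∈ s, (p i : ℂ) * Complex.exp (L i x * Complex.I)‖
  set P := ∑ i ∈ s, p i
  have hc : 0 < 2 * (μ / π) ^ 2 := by positivity
  have hZP : Z ^ 2 ≤ P ^ 2 := by
    refine pow_le_pow_left₀ (norm_nonneg _) (norm_sum_le_of_le s fun i hi => ?_) 2
    rw [norm_mul, Complex.norm_exp_ofReal_mul_I, mul_one, Complex.norm_real, Real.norm_eq_abs,
      abs_of_nonneg (hμ.le.trans (hp i hi))]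
  have hnonneg : 0 ≤ (P ^ 2 - Z ^ 2) / (2 * (μ / π) ^ 2) := div_nonneg (by linarith) hc.le
  have hnorm := hbound x √((P ^ 2 - Z ^ 2) / (2 * (μ / π) ^ 2)) (Real.sqrt_nonneg _)
    fun i hi k hk => Real.abs_le_sqrt <| (le_div_iff₀ hc).mpr (by linarith [hpair i hi k hk])
  have hsq := pow_le_pow_left₀ (norm_nonneg _) hnorm 2
  rw [mul_pow, Real.sq_sqrt hnonneg] at hsq
  have : 2 * (μ / π) ^ 2 / K ^ 2 * ‖x‖ ^ 2 ≤ P ^ 2 - Z ^ 2 := by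
    rw [div_mul_eq_mul_div, div_le_iff₀ (by positivity)]
    calc _ ≤ 2 * (μ / π) ^ 2 * (K ^ 2 * ((P ^ 2 - Z ^ 2) / (2 * (μ / π) ^ 2))) := by gcongr
      _ = _ := by field_simp
  linarith

end ExponentialSums

section Gaussian

variable {ι : Type*} [Fintype ι]

theorem sum_sq_le_card_mul_sq_norm (v : ι → ℝ) :
    ∑ j, v j ^ 2 ≤ Fintype.card ι * ‖v‖ ^ 2 := by
  have hcoord : ∀ j ∈ univ, v j ^ 2 ≤ ‖v‖ ^ 2 := fun j _ =>
    sq_le_sq' (neg_le_of_abs_le (norm_le_pi_norm v j)) (le_of_abs_le (norm_le_pi_norm v j))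
  simpa [nsmul_eq_mul] using sum_le_card_nsmul univ _ _ hcoord

theorem integrable_exp_neg_mul_sum_sq_sub (a : ι → ℝ) {c : ℝ} (hc : 0 < c) :
    Integrable fun θ : ι → ℝ => Real.exp (-c * ∑ j, (θ j - a j) ^ 2) := by
  simp only [mul_sum, Real.exp_sum]
  exact Integrable.fintype_prod fun j => (integrable_exp_neg_mul_sq hc).comp_sub_right (a j)

theorem integral_exp_neg_mul_sum_sq_sub (a : ι → ℝ) (c : ℝ) :
    ∫ θ : ι → ℝ, Real.exp (-c * ∑ j, (θ j - a j) ^ 2) = √(π / c) ^ Fintype.card ι := by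
  simp only [mul_sum, Real.exp_sum]
  rw [integral_fintype_prod_volume_eq_prod fun j x => Real.exp (-c * (x - a j) ^ 2)]
  have hcoord (j : ι) : ∫ x : ℝ, Real.exp (-c * (x - a j) ^ 2) = √(π / c) := by
    rw [integral_sub_right_eq_self fun x : ℝ => Real.exp (-c * x ^ 2), integral_gaussian]
  simp only [hcoord, prod_const, card_univ]

theorem norm_setIntegral_le_of_norm_le_gaussian {E : Type*} [NormedAddCommGroup E]
    [NormedSpace ℝ E] {f : (ι → ℝ) → E} {s : Set (ι → ℝ)} (hs : MeasurableSet s) (a : ι → ℝ)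
    {c K : ℝ} (hc : 0 < c) (hK : 0 ≤ K)
    (hf : ∀ θ ∈ s, ‖f θ‖ ≤ K * Real.exp (-c * ∑ j, (θ j - a j) ^ 2)) :
    ‖∫ θ in s, f θ‖ ≤ K * √(π / c) ^ Fintype.card ι := by
  have hint := (integrable_exp_neg_mul_sum_sq_sub a hc).const_mul K
  rw [← integral_exp_neg_mul_sum_sq_sub a c, ← integral_const_mul]
  exact (norm_integral_le_of_norm_le hint.integrableOn
    ((ae_restrict_iff' hs).mpr (Eventually.of_forall hf))).trans
    (setIntegral_le_integral hint (Eventually.of_forall fun θ => by positivity))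

end Gaussian

section Asymptotics

theorem sqrt_div_pow (a : ℝ) {x : ℝ} (hx : 0 ≤ x) (k : ℕ) :
    √(a / x) ^ k = √a ^ k * x ^ (-(k : ℝ) / 2) := by
  rw [Real.sqrt_div' a hx, div_pow, div_eq_mul_inv, neg_div, Real.rpow_neg hx,
    Real.sqrt_eq_rpow x, ← Real.rpow_mul_natCast hx]
  ring_nf

theorem eventually_natCast_rpow_pos (a : ℝ) : ∀ᶠ n : ℕ in atTop, 0 < (n : ℝ) ^ a :=
  (eventually_gt_atTop 0).mono fun _ hn => Real.rpow_pos_of_pos (mod_cast hn) a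

theorem isLittleO_natCast_rpow {a b : ℝ} (hab : a < b) :
    (fun n : ℕ => (n : ℝ) ^ a) =o[atTop] fun n : ℕ => (n : ℝ) ^ b := by
  refine isLittleO_of_tendsto' ?_ ?_
  · exact (eventually_natCast_rpow_pos b).mono fun n hn h => absurd h hn.ne'
  · refine ((tendsto_rpow_neg_atTop (sub_pos.mpr hab)).comp
      tendsto_natCast_atTop_atTop).congr' ?_
    filter_upwards [eventually_gt_atTop 0] with n hn
    rw [Function.comp_apply, neg_sub, Real.rpow_sub (mod_cast hn)]

theorem isLittleO_natCast_rpow_sq {a b : ℝ} (hab : a * 2 < b) :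
    (fun n : ℕ => ((n : ℝ) ^ a) ^ 2) =o[atTop] fun n : ℕ => (n : ℝ) ^ b := by
  simp only [← Real.rpow_mul_natCast (Nat.cast_nonneg _)]
  exact isLittleO_natCast_rpow (mod_cast hab)

theorem tendsto_zero_of_tendsto_sq_zero {ι : Type*} {l : Filter ι} {u : ι → ℝ}
    (h : Tendsto (fun n => u n ^ 2) l (𝓝 0)) : Tendsto u l (𝓝 0) := by
  rw [tendsto_zero_iff_abs_tendsto_zero]
  simpa [Function.comp_def, Real.sqrt_sq_eq_abs] using (Real.continuous_sqrt.tendsto 0).comp h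

theorem isBigO_exp_mul_mul_sq {u : ℕ → ℝ} (hu : u =O[atTop] fun n => (n : ℝ) ^ (-(1 / 2) : ℝ))
    (c : ℝ) : (fun n => Real.exp (c * (n * u n ^ 2))) =O[atTop] fun _ => (1 : ℝ) := by
  have hmul : (fun n : ℕ => n * u n ^ 2) =O[atTop] fun _ => (1 : ℝ) := by
    refine ((isBigO_refl (fun n : ℕ => (n : ℝ)) atTop).mul (hu.pow 2)).congr' .rfl ?_
    filter_upwards [eventually_gt_atTop 0] with n hn
    have : (0 : ℝ) < n := mod_cast hn
    rw [← Real.rpow_mul_natCast this.le]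
    norm_num [Real.rpow_neg_one, this.ne']
  refine Real.isBigO_exp_comp_one.mpr ?_
  exact ((isBigO_one_iff ℝ).mp (hmul.const_mul_left c)).mono_le (.of_forall fun n => le_abs_self _)

end Asymptotics

namespace ZeroDrift

/-- The linear form `φ ↦ ∑ j, i j * φ j`: the argument of the Laurent monomial with exponent
vector `i` on the unit torus at angles `φ`. -/
def phase {ι : Type*} [Fintype ι] (i : ι → ℤ) : (ι → ℝ) →L[ℝ] ℝ :=
  ∑ j, (i j : ℝ) • ContinuousLinearMap.proj j

/-- The exponent vectors in `S` lie in no affine hyperplane, expressed through linear forms: no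
nonzero vector of angles gives all monomials of `S` the same phase. -/
def IsNondegenerate {ι : Type*} [Fintype ι] (S : Finset (ι → ℤ)) : Prop :=
  ∀ φ : ι → ℝ, (∀ i ∈ S, ∀ k ∈ S, phase i φ = phase k φ) → φ = 0

section Phase

variable {ι : Type*} [Fintype ι]

theorem phase_apply (i : ι → ℤ) (φ : ι → ℝ) : phase i φ = ∑ j, (i j : ℝ) * φ j := by
  simp [phase]

variable [DecidableEq ι]

theorem phase_update (i : ι → ℤ) (k : ι) (a : ℤ) (φ : ι → ℝ) :
    phase (Function.update i k a) φ = phase i φ + (a - i k) * φ k := by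
  rw [phase_apply, phase_apply, ← sub_eq_iff_eq_add', ← sum_sub_distrib, Fintype.sum_eq_single k]
  · rw [Function.update_self]
    ring
  · intro j hj
    rw [Function.update_of_ne hj, sub_self]

theorem phase_update_neg (i : ι → ℤ) (k : ι) (φ : ι → ℝ) :
    phase (Function.update i k (-i k)) φ = phase i (Function.update φ k (-φ k)) := by
  rw [phase_apply, phase_apply]
  refine sum_congr rfl fun j _ => ?_
  rcases eq_or_ne j k with rfl | hj <;> simp [*]

theorem IsNondegenerate.eq_zero_of_phase_update_neg {S : Finset (ι → ℤ)}
    (hS : IsNondegenerate S) (k : ι) {φ : ι → ℝ}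
    (h : ∀ i ∈ S, ∀ i' ∈ S,
      phase (Function.update i k (-i k)) φ = phase (Function.update i' k (-i' k)) φ) :
    φ = 0 := by
  simp only [phase_update_neg] at h
  have hupdate := hS _ h
  funext j
  have hj := congrFun hupdate j
  rcases eq_or_ne j k with rfl | hjk
  · simpa using hj
  · simpa [hjk] using hj

end Phase

variable {d : ℕ} {S : Finset (Fin (d + 1) → ℤ)} {w : (Fin (d + 1) → ℤ) → ℝ}

theorem isNondegenerate_of_update_neg_mem
    (hsym : ∀ k : Fin d, ∀ i ∈ S, Function.update i k.castSucc (-i k.castSucc) ∈ S)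
    (hmove : ∀ k : Fin d, ∃ i ∈ S, i k.castSucc ≠ 0)
    (hlast : ∃ i ∈ S, ∃ k ∈ S, i (Fin.last d) ≠ k (Fin.last d)) : IsNondegenerate S := by
  intro φ hφ
  have hinit (k : Fin d) : φ k.castSucc = 0 := by
    obtain ⟨i, hi, hik⟩ := hmove k
    have hreflect := hφ i hi _ (hsym k i hi)
    rw [phase_update, Int.cast_neg] at hreflect
    have hmul : (i k.castSucc : ℝ) * φ k.castSucc = 0 := by linarith
    exact (mul_eq_zero.mp hmul).resolve_left (Int.cast_ne_zero.mpr hik)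
  have hphase (i : Fin (d + 1) → ℤ) : phase i φ = i (Fin.last d) * φ (Fin.last d) := by
    simp [phase_apply, Fin.sum_univ_castSucc, hinit]
  obtain ⟨i, hi, k, hk, hik⟩ := hlast
  have hmul := hφ i hi k hk
  rw [hphase, hphase] at hmul
  funext j
  induction j using Fin.lastCases with
  | cast j => exact hinit j
  | last => exact (mul_eq_mul_right_iff.mp hmul).resolve_left (mod_cast hik)

/-- The total weight of the steps with last coordinate `a`; it is `A(1)` for `a = -1` and `B(1)`
for `a = 1`. -/
def lastWeight (S : Finset (Fin (d + 1) → ℤ)) (w : (Fin (d + 1) → ℤ) → ℝ) (a : ℤ) : ℝ :=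
  ∑ i ∈ S.filter fun i => i (Fin.last d) = a, w i

theorem IsNondegenerate.nonempty (hS : IsNondegenerate S) : S.Nonempty := by
  by_contra hempty
  have hone := hS 1 fun i hi => (hempty ⟨i, hi⟩).elim
  exact one_ne_zero (congrFun hone 0)

theorem IsNondegenerate.exists_last_ne_zero (hS : IsNondegenerate S) :
    ∃ i ∈ S, i (Fin.last d) ≠ 0 := by
  by_contra! hzero
  have hphase (i : Fin (d + 1) → ℤ) : phase i (Pi.single (Fin.last d) 1) = i (Fin.last d) := by
    simp [phase_apply, Pi.single_apply]
  have hsingle := hS (Pi.single (Fin.last d) 1) fun i hi k hk => by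
    rw [hphase, hphase, hzero i hi, hzero k hk]
  exact one_ne_zero ((Pi.single_eq_zero_iff).mp hsingle)

theorem IsNondegenerate.lastWeight_one_pos (hS : IsNondegenerate S)
    (hlast : ∀ i ∈ S, i (Fin.last d) = -1 ∨ i (Fin.last d) = 0 ∨ i (Fin.last d) = 1)
    (hw : ∀ i ∈ S, 0 < w i)
    (hzero : lastWeight S w (-1) = lastWeight S w 1) : 0 < lastWeight S w 1 := by
  have hpos {a : ℤ} {i : Fin (d + 1) → ℤ} (hi : i ∈ S) (hia : i (Fin.last d) = a) :
      0 < lastWeight S w a :=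
    sum_pos (fun k hk => hw k (mem_filter.mp hk).1) ⟨i, mem_filter.mpr ⟨hi, hia⟩⟩
  obtain ⟨i, hi, hne⟩ := hS.exists_last_ne_zero
  rcases hlast i hi with h | h | h
  · exact hzero ▸ hpos hi h
  · exact absurd h hne
  · exact hpos hi h

theorem wOf_ne_zero (m : Fin (d + 1) → Fin 4) (j : Fin (d + 1)) : wOf d m j ≠ 0 :=
  pow_ne_zero _ Complex.I_ne_zero

theorem norm_wOf (m : Fin (d + 1) → Fin 4) (j : Fin (d + 1)) : ‖wOf d m j‖ = 1 := by
  simp [wOf]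

theorem wOf_pow_four (m : Fin (d + 1) → Fin 4) (j : Fin (d + 1)) : wOf d m j ^ 4 = 1 := by
  rw [wOf, pow_right_comm, Complex.I_pow_four, one_pow]

theorem wOf_ne_one {m : Fin (d + 1) → Fin 4} {j : Fin (d + 1)} (hj : m j ≠ 0) :
    wOf d m j ≠ 1 := by
  rw [wOf]
  generalize m j = k at hj
  fin_cases k <;> first | exact absurd rfl hj | norm_num [Complex.ext_iff, pow_succ]

theorem exp_I_mul_argOf (m : Fin (d + 1) → Fin 4) (j : Fin (d + 1)) :
    Complex.exp (Complex.I * argOf d m j) = wOf d m j := by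
  have harg : Complex.I * (argOf d m j : ℂ) = ((m j : ℕ) : ℂ) * (π / 2 * Complex.I) := by
    rw [argOf]
    push_cast
    ring
  rw [harg, Complex.exp_nat_mul, Complex.exp_pi_div_two_mul_I, wOf]

theorem zOf_zero_argOf (m : Fin (d + 1) → Fin 4) : zOf d 0 (argOf d m) = wOf d m := by
  funext j
  simp [zOf, exp_I_mul_argOf]

theorem zOf_eq_wOf_mul (m : Fin (d + 1) → Fin 4) (ε : ℝ) (θ : Fin (d + 1) → ℝ)
    (j : Fin (d + 1)) :
    zOf d ε θ j = wOf d m j * ((if j = Fin.last d then (1 - ε : ℂ) else 1) *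
      Complex.exp ((θ - argOf d m) j * Complex.I)) := by
  rw [← exp_I_mul_argOf, mul_left_comm, ← Complex.exp_add, zOf, Pi.sub_apply]
  push_cast
  ring_nf

theorem prod_zOf_zpow (m : Fin (d + 1) → Fin 4) (ε : ℝ) (θ : Fin (d + 1) → ℝ)
    (i : Fin (d + 1) → ℤ) :
    ∏ j, zOf d ε θ j ^ i j = (∏ j, wOf d m j ^ i j) *
      ((1 - ε : ℂ) ^ i (Fin.last d) * Complex.exp (phase i (θ - argOf d m) * Complex.I)) := by
  have hlast : ∏ j, (if j = Fin.last d then (1 - ε : ℂ) else 1) ^ i j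
      = (1 - ε : ℂ) ^ i (Fin.last d) := by
    simp
  have hexp : ∏ j, Complex.exp ((θ - argOf d m) j * Complex.I) ^ i j
      = Complex.exp (phase i (θ - argOf d m) * Complex.I) := by
    simp only [← Complex.exp_int_mul, ← Complex.exp_sum, phase_apply, Complex.ofReal_sum, sum_mul,
      Complex.ofReal_mul, Complex.ofReal_intCast, mul_assoc]
  simp only [zOf_eq_wOf_mul m, mul_zpow, prod_mul_distrib, hlast, hexp]

theorem norm_zOf_last {ε : ℝ} (hε : ε ≤ 1) (θ : Fin (d + 1) → ℝ) :
    ‖zOf d ε θ (Fin.last d)‖ = 1 - ε := by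
  rw [zOf, if_pos rfl, norm_mul, Complex.norm_exp_I_mul_ofReal, mul_one, ← Complex.ofReal_one,
    ← Complex.ofReal_sub, Complex.norm_of_nonneg (sub_nonneg.mpr hε)]

theorem zOf_ne_zero {ε : ℝ} (hε : ε < 1) (θ : Fin (d + 1) → ℝ) (j : Fin (d + 1)) :
    zOf d ε θ j ≠ 0 := by
  refine mul_ne_zero ?_ (Complex.exp_ne_zero _)
  split_ifs
  · exact mod_cast (sub_pos.mpr hε).ne'
  · exact one_ne_zero

theorem differentiable_zOf (d : ℕ) :
    Differentiable ℝ fun x : ℝ × (Fin (d + 1) → ℝ) => zOf d x.1 x.2 := by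
  refine differentiable_pi.mpr fun j => ?_
  unfold zOf
  split_ifs <;> fun_prop

theorem norm_SC_wOf_of_mem_GammaIdx {m : Fin (d + 1) → Fin 4} (hm : m ∈ GammaIdx d S w) :
    ‖SC d S w (wOf d m)‖ = S1 d S w := by
  have hnorm := (mem_filter.mp hm).2.2
  rw [norm_div, norm_one, norm_mul, norm_prod] at hnorm
  simpa only [norm_wOf, prod_const_one, one_mul, one_div, inv_inj] using hnorm

theorem exists_forall_prod_wOf_zpow_eq (hw : ∀ i ∈ S, 0 < w i) {m : Fin (d + 1) → Fin 4}
    (hm : m ∈ GammaIdx d S w) :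
    ∃ c : ℂ, ‖c‖ = 1 ∧ ∀ i ∈ S, ∏ j, wOf d m j ^ i j = c := by
  have hunit (i : Fin (d + 1) → ℤ) : ‖∏ j, wOf d m j ^ i j‖ = 1 := by
    simp [norm_prod, norm_zpow, norm_wOf]
  rcases S.eq_empty_or_nonempty with rfl | ⟨k, hk⟩
  · exact ⟨1, norm_one, by simp⟩
  · refine ⟨_, hunit k, fun i hi => eq_of_norm_sum_smul_eq_sum hw (fun i _ => hunit i) ?_ hi hk⟩
    simpa only [Complex.real_smul, SC, S1] using norm_SC_wOf_of_mem_GammaIdx hm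

theorem prod_wOf_zpow_update_neg {m : Fin (d + 1) → Fin 4}
    (hm : ∀ j : Fin d, m j.castSucc = 0 ∨ m j.castSucc = 2) (i : Fin (d + 1) → ℤ) :
    ∏ j, wOf d m j ^ Function.update i (Fin.last d) (-i (Fin.last d)) j
      = (∏ j, wOf d m j ^ i j)⁻¹ := by
  have hreal (j : Fin d) : (wOf d m j.castSucc)⁻¹ = wOf d m j.castSucc := by
    rcases hm j with h | h <;> simp [wOf, h]
  simp only [Fin.prod_univ_castSucc, mul_inv, ← prod_inv_distrib, Function.update_self, zpow_neg,
    Function.update_of_ne (Fin.castSucc_ne_last _)]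
  congr 1
  refine prod_congr rfl fun j _ => ?_
  rw [← inv_zpow, hreal]

theorem sum_filter_wOf_mul_zpow {m : Fin (d + 1) → Fin 4} {c : ℂ}
    (hc : ∀ i ∈ S, ∏ j, wOf d m j ^ i j = c) (a : ℤ) :
    (∑ i ∈ S.filter fun i => i (Fin.last d) = a,
        (w i : ℂ) * ∏ j : Fin d, wOf d m j.castSucc ^ i j.castSucc) * wOf d m (Fin.last d) ^ a
      = c * lastWeight S w a := by
  rw [lastWeight, sum_mul, Complex.ofReal_sum, mul_sum]
  refine sum_congr rfl fun i hi => ?_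
  obtain ⟨hiS, rfl⟩ := mem_filter.mp hi
  rw [← hc i hiS, Fin.prod_univ_castSucc]
  ring

theorem BC_wOf_ne_zero (hw : ∀ i ∈ S, 0 < w i)
    (hpos : 0 < lastWeight S w 1)
    {m : Fin (d + 1) → Fin 4} (hm : m ∈ GammaIdx d S w) : BC d S w (wOf d m) ≠ 0 := by
  obtain ⟨c, hc1, hc⟩ := exists_forall_prod_wOf_zpow_eq hw hm
  refine left_ne_zero_of_mul (b := wOf d m (Fin.last d) ^ (1 : ℤ)) ?_
  rw [BC, sum_filter_wOf_mul_zpow hc]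
  exact mul_ne_zero (norm_ne_zero_iff.mp (hc1.symm ▸ one_ne_zero)) (mod_cast hpos.ne')

theorem BC_sub_sq_mul_AC_wOf_eq_zero (hw : ∀ i ∈ S, 0 < w i)
    (hzero : lastWeight S w (-1) = lastWeight S w 1)
    {m : Fin (d + 1) → Fin 4} (hm : m ∈ GammaIdx d S w) :
    BC d S w (wOf d m) - wOf d m (Fin.last d) ^ 2 * AC d S w (wOf d m) = 0 := by
  obtain ⟨c, -, hc⟩ := exists_forall_prod_wOf_zpow_eq hw hm
  have hq := wOf_ne_zero m (Fin.last d)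
  have hAB : AC d S w (wOf d m) * wOf d m (Fin.last d) ^ (-1 : ℤ)
      = BC d S w (wOf d m) * wOf d m (Fin.last d) ^ (1 : ℤ) := by
    rw [AC, BC, sum_filter_wOf_mul_zpow hc, sum_filter_wOf_mul_zpow hc, hzero]
  rw [zpow_one, zpow_neg_one, ← div_eq_mul_inv, div_eq_iff hq] at hAB
  rw [hAB]
  linear_combination -BC d S w (wOf d m) * wOf_pow_four m (Fin.last d)

theorem SbarC_eq_sum (z : Fin (d + 1) → ℂ) :
    SbarC d S w z = ∑ i ∈ S, (w i : ℂ) *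
      ∏ j, z j ^ Function.update i (Fin.last d) (-i (Fin.last d)) j := by
  simp only [SbarC, Fin.prod_univ_castSucc, Function.update_self,
    Function.update_of_ne (Fin.castSucc_ne_last _), mul_assoc]

theorem norm_SbarC_zOf (hw : ∀ i ∈ S, 0 < w i) {m : Fin (d + 1) → Fin 4}
    (hm : m ∈ GammaIdx d S w) (ε : ℝ) (θ : Fin (d + 1) → ℝ) :
    ‖SbarC d S w (zOf d ε θ)‖
      = ‖∑ i ∈ S, ((w i * (1 - ε) ^ (-i (Fin.last d)) : ℝ) : ℂ) * Complex.exp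
          (phase (Function.update i (Fin.last d) (-i (Fin.last d))) (θ - argOf d m)
            * Complex.I)‖ := by
  obtain ⟨c, hc1, hc⟩ := exists_forall_prod_wOf_zpow_eq hw hm
  have hterm : ∀ i ∈ S,
      (w i : ℂ) * ∏ j, zOf d ε θ j ^ Function.update i (Fin.last d) (-i (Fin.last d)) j
        = c⁻¹ * (((w i * (1 - ε) ^ (-i (Fin.last d)) : ℝ) : ℂ) * Complex.exp
          (phase (Function.update i (Fin.last d) (-i (Fin.last d))) (θ - argOf d m)
            * Complex.I)) := fun i hi => by
    rw [prod_zOf_zpow m, prod_wOf_zpow_update_neg (mem_filter.mp hm).2.1, hc i hi,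
      Function.update_self]
    push_cast
    ring
  rw [SbarC_eq_sum, sum_congr rfl hterm, ← mul_sum, norm_mul, norm_inv, hc1, inv_one, one_mul]

theorem sum_mul_zpow_neg_last
    (hlast : ∀ i ∈ S, i (Fin.last d) = -1 ∨ i (Fin.last d) = 0 ∨ i (Fin.last d) = 1)
    (hzero : lastWeight S w (-1) = lastWeight S w 1) {ε : ℝ} (hε : ε ≠ 1) :
    ∑ i ∈ S, w i * (1 - ε) ^ (-i (Fin.last d))
      = S1 d S w + ε ^ 2 / (1 - ε) * lastWeight S w 1 := by
  have hε' : 1 - ε ≠ 0 := sub_ne_zero.mpr hε.symm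
  have hterm : ∀ i ∈ S, w i * (1 - ε) ^ (-i (Fin.last d)) = w i
      + (-ε * (if i (Fin.last d) = -1 then w i else 0)
        + ε / (1 - ε) * if i (Fin.last d) = 1 then w i else 0) := fun i hi => by
    rcases hlast i hi with h | h | h <;> rw [h] <;> norm_num
    · ring
    · field_simp
      ring
  rw [sum_congr rfl hterm, sum_add_distrib, sum_add_distrib, ← mul_sum, ← mul_sum, ← sum_filter,
    ← sum_filter, ← lastWeight, ← lastWeight, hzero, S1]
  field_simp
  ring

theorem sum_mul_zpow_neg_last_le
    (hlast : ∀ i ∈ S, i (Fin.last d) = -1 ∨ i (Fin.last d) = 0 ∨ i (Fin.last d) = 1)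
    (hw : ∀ i ∈ S, 0 < w i)
    (hzero : lastWeight S w (-1) = lastWeight S w 1) {ε : ℝ} (hε : ε ≤ 1 / 2) :
    ∑ i ∈ S, w i * (1 - ε) ^ (-i (Fin.last d)) ≤ S1 d S w * (1 + 2 * ε ^ 2) := by
  have hB : lastWeight S w 1 ≤ S1 d S w :=
    sum_le_sum_of_subset_of_nonneg (filter_subset _ _) fun i hi _ => (hw i hi).le
  have hquot : ε ^ 2 / (1 - ε) ≤ 2 * ε ^ 2 := by
    rw [div_le_iff₀ (by linarith)]
    nlinarith [sq_nonneg ε]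
  rw [sum_mul_zpow_neg_last hlast hzero (by linarith), mul_add, mul_one, mul_comm (S1 d S w)]
  exact add_le_add le_rfl (mul_le_mul hquot hB
    (sum_nonneg fun i hi => (hw i (mem_filter.mp hi).1).le) (by positivity))

theorem exists_eventually_forall_le_mul_zpow_neg_last (hw : ∀ i ∈ S, 0 < w i) :
    ∃ μ > 0, ∀ᶠ ε in 𝓝 (0 : ℝ), ∀ i ∈ S, μ ≤ w i * (1 - ε) ^ (-i (Fin.last d)) := by
  have hlt : ∀ᶠ μ in 𝓝[>] (0 : ℝ), ∀ i ∈ S, μ < w i :=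
    (eventually_all_finset S).mpr fun i hi => nhdsWithin_le_nhds (eventually_lt_nhds (hw i hi))
  obtain ⟨μ, hμw, hμ⟩ := (hlt.and self_mem_nhdsWithin).exists
  refine ⟨μ, hμ, (eventually_all_finset S).mpr fun i hi => ?_⟩
  have hcont : ContinuousAt (fun ε : ℝ => w i * (1 - ε) ^ (-i (Fin.last d))) 0 :=
    continuousAt_const.mul ((continuousAt_const.sub continuousAt_id).zpow₀ _ (by norm_num))
  exact (continuousAt_const.eventually_lt hcont (by simpa using hμw i hi)).mono fun _ h => h.le

theorem exists_eventually_norm_SbarC_zOf_sq_add_le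
    (hlast : ∀ i ∈ S, i (Fin.last d) = -1 ∨ i (Fin.last d) = 0 ∨ i (Fin.last d) = 1)
    (hw : ∀ i ∈ S, 0 < w i) (hS : IsNondegenerate S)
    (hzero : lastWeight S w (-1) = lastWeight S w 1)
    {m : Fin (d + 1) → Fin 4} (hm : m ∈ GammaIdx d S w) :
    ∃ c > 0, ∀ᶠ x : ℝ × (Fin (d + 1) → ℝ) in 𝓝 (0, argOf d m),
      ‖SbarC d S w (zOf d x.1 x.2)‖ ^ 2 + c * ‖x.2 - argOf d m‖ ^ 2
        ≤ (S1 d S w * (1 + 2 * x.1 ^ 2)) ^ 2 := by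
  obtain ⟨μ, hμ, hweight⟩ := exists_eventually_forall_le_mul_zpow_neg_last hw
  obtain ⟨c, hc, hexp⟩ := exists_eventually_norm_sum_mul_exp_sq_le S
    (fun i => phase (Function.update i (Fin.last d) (-i (Fin.last d))))
    (fun _ => hS.eq_zero_of_phase_update_neg (Fin.last d)) hμ
  refine ⟨c, hc, ?_⟩
  have hsub : Tendsto (fun θ => θ - argOf d m) (𝓝 (argOf d m)) (𝓝 0) :=
    (tendsto_sub_nhds_zero_iff).mpr tendsto_id
  rw [nhds_prod_eq]
  filter_upwards [(hweight.and (eventually_le_nhds (by norm_num : (0 : ℝ) < 1 / 2))).prod_mk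
    (hsub.eventually hexp)] with x hx
  rw [norm_SbarC_zOf hw hm]
  exact (hx.2 _ hx.1.1).trans (pow_le_pow_left₀
    (sum_nonneg fun i hi => hμ.le.trans (hx.1.1 i hi))
    (sum_mul_zpow_neg_last_le hlast hw hzero hx.1.2) 2)

theorem exists_eventually_norm_SbarC_zOf_le
    (hlast : ∀ i ∈ S, i (Fin.last d) = -1 ∨ i (Fin.last d) = 0 ∨ i (Fin.last d) = 1)
    (hw : ∀ i ∈ S, 0 < w i) (hS : IsNondegenerate S)
    (hzero : lastWeight S w (-1) = lastWeight S w 1)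
    {m : Fin (d + 1) → Fin 4} (hm : m ∈ GammaIdx d S w) :
    ∃ κ > 0, ∀ᶠ x : ℝ × (Fin (d + 1) → ℝ) in 𝓝 (0, argOf d m),
      ‖SbarC d S w (zOf d x.1 x.2)‖
        ≤ S1 d S w * Real.exp (4 * x.1 ^ 2 - κ * ∑ j, (x.2 j - argOf d m j) ^ 2) := by
  obtain ⟨c, hc, hsq⟩ := exists_eventually_norm_SbarC_zOf_sq_add_le hlast hw hS hzero hm
  have hS1 : 0 < S1 d S w := sum_pos hw hS.nonempty
  have hnear : ∀ᶠ x : ℝ × (Fin (d + 1) → ℝ) in 𝓝 (0, argOf d m), x.1 ^ 2 < 1 :=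
    ContinuousAt.eventually_lt (by fun_prop) continuousAt_const (by norm_num)
  refine ⟨c / (2 * S1 d S w ^ 2 * (d + 1)), by positivity, ?_⟩
  filter_upwards [hsq, hnear] with x hx hx1
  refine (sq_le_sq₀ (norm_nonneg _) (by positivity)).mp ?_
  set κ := c / (2 * S1 d S w ^ 2 * (d + 1))
  set Φ := ∑ j, (x.2 j - argOf d m j) ^ 2
  have hΦ : Φ ≤ (d + 1) * ‖x.2 - argOf d m‖ ^ 2 := by
    simpa using sum_sq_le_card_mul_sq_norm (x.2 - argOf d m)
  have hκ : S1 d S w ^ 2 * (2 * κ * Φ) ≤ c * ‖x.2 - argOf d m‖ ^ 2 :=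
    calc _ ≤ S1 d S w ^ 2 * (2 * κ * ((d + 1) * ‖x.2 - argOf d m‖ ^ 2)) := by gcongr
      _ = _ := by
        simp only [κ]
        field_simp
  have hε : (1 + 2 * x.1 ^ 2) ^ 2 ≤ 1 + 8 * x.1 ^ 2 := by nlinarith [sq_nonneg x.1]
  calc ‖SbarC d S w (zOf d x.1 x.2)‖ ^ 2
      ≤ S1 d S w ^ 2 * (1 + 2 * x.1 ^ 2) ^ 2 - S1 d S w ^ 2 * (2 * κ * Φ) := by
        rw [← mul_pow]
        linarith
    _ ≤ S1 d S w ^ 2 * (8 * x.1 ^ 2 - 2 * κ * Φ + 1) := by nlinarith [sq_pos_of_pos hS1]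
    _ ≤ S1 d S w ^ 2 * Real.exp (8 * x.1 ^ 2 - 2 * κ * Φ) := by
        gcongr
        exact Real.add_one_le_exp _
    _ = (S1 d S w * Real.exp (4 * x.1 ^ 2 - κ * Φ)) ^ 2 := by
        rw [mul_pow, ← Real.exp_nat_mul]
        push_cast
        ring_nf

/-- The part `∏ (1 + z_j) / (1 - z_{d+1}) * (B - z_{d+1} ^ 2 A) / B` of the residue integrand that
does not depend on `n`; the factors `z_j` of the Jacobian cancel the denominator `z_1 ⋯ z_{d+1}`. -/
def amplitude (S : Finset (Fin (d + 1) → ℤ)) (w : (Fin (d + 1) → ℤ) → ℝ) (ε : ℝ)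
    (θ : Fin (d + 1) → ℝ) : ℂ :=
  (∏ j : Fin d, (1 + zOf d ε θ j.castSucc)) / (1 - zOf d ε θ (Fin.last d)) *
    ((BC d S w (zOf d ε θ) - zOf d ε θ (Fin.last d) ^ 2 * AC d S w (zOf d ε θ)) /
      BC d S w (zOf d ε θ))

theorem norm_resIntegrand (n : ℕ) {ε : ℝ} (hε : ε < 1) (θ : Fin (d + 1) → ℝ) :
    ‖resIntegrand d S w n ε θ‖ = ‖amplitude S w ε θ‖ * ‖SbarC d S w (zOf d ε θ)‖ ^ n := by
  have hz : ‖∏ j, zOf d ε θ j‖ ≠ 0 :=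
    norm_ne_zero_iff.mpr (prod_ne_zero_iff.mpr fun j _ => zOf_ne_zero hε θ j)
  simp only [resIntegrand, amplitude, prod_mul_distrib, norm_mul, norm_div, norm_pow, prod_const,
    Complex.norm_I, one_pow, one_mul]
  field_simp

theorem differentiableAt_sum_mul_prod_zpow (T : Finset (Fin (d + 1) → ℤ)) {z : Fin (d + 1) → ℂ}
    (hz : ∀ j, z j ≠ 0) :
    DifferentiableAt ℂ
      (fun z => ∑ i ∈ T, (w i : ℂ) * ∏ j : Fin d, z j.castSucc ^ i j.castSucc) z := by
  fun_prop (disch := simp [hz])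

theorem isBigO_BC_sub_sq_mul_AC_div (hw : ∀ i ∈ S, 0 < w i)
    (hzero : lastWeight S w (-1) = lastWeight S w 1) (hpos : 0 < lastWeight S w 1)
    {m : Fin (d + 1) → Fin 4} (hm : m ∈ GammaIdx d S w) :
    (fun x : ℝ × (Fin (d + 1) → ℝ) =>
      (BC d S w (zOf d x.1 x.2) - zOf d x.1 x.2 (Fin.last d) ^ 2 * AC d S w (zOf d x.1 x.2)) /
        BC d S w (zOf d x.1 x.2)) =O[𝓝 (0, argOf d m)] fun x => x - (0, argOf d m) := by
  set R : (Fin (d + 1) → ℂ) → ℂ :=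
    fun z => (BC d S w z - z (Fin.last d) ^ 2 * AC d S w z) / BC d S w z
  have hA : DifferentiableAt ℂ (AC d S w) (wOf d m) :=
    differentiableAt_sum_mul_prod_zpow _ (wOf_ne_zero m)
  have hB : DifferentiableAt ℂ (BC d S w) (wOf d m) :=
    differentiableAt_sum_mul_prod_zpow _ (wOf_ne_zero m)
  have hR : DifferentiableAt ℂ R (zOf d 0 (argOf d m)) := by
    rw [zOf_zero_argOf]
    have hne := BC_wOf_ne_zero hw hpos hm
    fun_prop (disch := exact hne)
  have hR0 : R (zOf d 0 (argOf d m)) = 0 := by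
    simp only [R, zOf_zero_argOf, BC_sub_sq_mul_AC_wOf_eq_zero hw hzero hm, zero_div]
  have hdiff := (hR.restrictScalars ℝ).comp (0, argOf d m) (differentiable_zOf d _)
  simpa [Function.comp_def, hR0] using hdiff.isBigO_sub

theorem isBigO_prod_one_add {m : Fin (d + 1) → Fin 4} {k : Fin d} (hk : m k.castSucc = 2) :
    (fun x : ℝ × (Fin (d + 1) → ℝ) => ∏ j : Fin d, (1 + zOf d x.1 x.2 j.castSucc))
      =O[𝓝 (0, argOf d m)] fun x => x - (0, argOf d m) := by
  have hdiff : DifferentiableAt ℝ (fun x : ℝ × (Fin (d + 1) → ℝ) =>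
      ∏ j : Fin d, (1 + zOf d x.1 x.2 j.castSucc)) (0, argOf d m) := by
    have := differentiable_zOf d
    fun_prop
  have hvanish : ∏ j : Fin d, (1 + zOf d 0 (argOf d m) j.castSucc) = 0 :=
    prod_eq_zero (mem_univ k) (by simp [zOf_zero_argOf, wOf, hk])
  simpa only [hvanish, sub_zero] using hdiff.isBigO_sub

theorem isBigO_inv_one_sub_zOf_last (a : Fin (d + 1) → ℝ) :
    (fun x : ℝ × (Fin (d + 1) → ℝ) => (1 - zOf d x.1 x.2 (Fin.last d))⁻¹)
      =O[𝓝[{x | 0 < x.1}] (0, a)] fun x => x.1⁻¹ := by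
  have hle : ∀ᶠ x : ℝ × (Fin (d + 1) → ℝ) in 𝓝 (0, a), x.1 < 1 :=
    ContinuousAt.eventually_lt (by fun_prop) continuousAt_const (by norm_num)
  refine IsBigO.of_bound' ?_
  filter_upwards [nhdsWithin_le_nhds hle, self_mem_nhdsWithin] with x hx1 hx0
  have hnorm := norm_sub_norm_le 1 (zOf d x.1 x.2 (Fin.last d))
  rw [norm_one, norm_zOf_last hx1.le, sub_sub_cancel] at hnorm
  rw [norm_inv, norm_inv, Real.norm_of_nonneg (le_of_lt hx0)]
  exact inv_anti₀ hx0 hnorm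

theorem isBigO_prod_one_add_div_one_sub {m : Fin (d + 1) → Fin 4}
    (hm : ∀ j : Fin d, m j.castSucc = 0 ∨ m j.castSucc = 2) (hm1 : m ≠ fun _ => 0) :
    (fun x : ℝ × (Fin (d + 1) → ℝ) =>
        (∏ j : Fin d, (1 + zOf d x.1 x.2 j.castSucc)) / (1 - zOf d x.1 x.2 (Fin.last d)))
      =O[𝓝[{x | 0 < x.1}] (0, argOf d m)] fun x => ‖x - (0, argOf d m)‖ / x.1 := by
  by_cases hk : ∃ k : Fin d, m k.castSucc = 2
  · obtain ⟨k, hk⟩ := hk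
    exact ((isBigO_prod_one_add hk).norm_right.mono nhdsWithin_le_nhds).mul
      (isBigO_inv_one_sub_zOf_last _)
  · have hlast : m (Fin.last d) ≠ 0 := fun h => hm1 <| funext fun j => by
      induction j using Fin.lastCases with
      | cast j => exact (hm j).resolve_right fun h => hk ⟨j, h⟩
      | last => exact h
    have hcont : ContinuousAt (fun x : ℝ × (Fin (d + 1) → ℝ) =>
        (∏ j : Fin d, (1 + zOf d x.1 x.2 j.castSucc)) / (1 - zOf d x.1 x.2 (Fin.last d)))
        (0, argOf d m) := by
      have := (differentiable_zOf d).continuous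
      refine ContinuousAt.div (by fun_prop) (by fun_prop) ?_
      rw [zOf_zero_argOf]
      exact sub_ne_zero.mpr (wOf_ne_one hlast).symm
    refine ((hcont.norm.isBoundedUnder_le.isBigO_one ℝ).mono nhdsWithin_le_nhds).trans ?_
    refine IsBigO.of_bound' ?_
    filter_upwards [self_mem_nhdsWithin] with x hx
    have hfst : ‖x.1 - 0‖ ≤ ‖x - (0, argOf d m)‖ :=
      norm_fst_le (x - (0, argOf d m))
    rw [sub_zero] at hfst
    rw [norm_one, norm_div, norm_norm]
    exact (one_le_div (norm_pos_iff.mpr (ne_of_gt hx))).mpr hfst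

theorem isBigO_amplitude (hw : ∀ i ∈ S, 0 < w i)
    (hzero : lastWeight S w (-1) = lastWeight S w 1) (hpos : 0 < lastWeight S w 1)
    {m : Fin (d + 1) → Fin 4} (hm : m ∈ GammaIdx d S w) (hm1 : m ≠ fun _ => 0) :
    (fun x : ℝ × (Fin (d + 1) → ℝ) => amplitude S w x.1 x.2)
      =O[𝓝[{x | 0 < x.1}] (0, argOf d m)] fun x => ‖x - (0, argOf d m)‖ ^ 2 / x.1 := by
  refine ((isBigO_prod_one_add_div_one_sub (mem_filter.mp hm).2.1 hm1).mul
    ((isBigO_BC_sub_sq_mul_AC_div hw hzero hpos hm).norm_right.mono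
      nhdsWithin_le_nhds)).congr_right fun x => ?_
  ring

theorem exists_eventually_norm_resIntegrand_le
    (hlast : ∀ i ∈ S, i (Fin.last d) = -1 ∨ i (Fin.last d) = 0 ∨ i (Fin.last d) = 1)
    (hw : ∀ i ∈ S, 0 < w i) (hS : IsNondegenerate S)
    (hzero : lastWeight S w (-1) = lastWeight S w 1)
    {m : Fin (d + 1) → Fin 4} (hm : m ∈ GammaIdx d S w) (hm1 : m ≠ fun _ => 0) :
    ∃ C > 0, ∃ κ > 0, ∀ᶠ x : ℝ × (Fin (d + 1) → ℝ) in 𝓝[{x | 0 < x.1}] (0, argOf d m), ∀ n : ℕ,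
      ‖resIntegrand d S w n x.1 x.2‖
        ≤ C * (‖x - (0, argOf d m)‖ ^ 2 / x.1) * (S1 d S w ^ n * Real.exp (4 * (n * x.1 ^ 2))) *
          Real.exp (-(κ * n) * ∑ j, (x.2 j - argOf d m j) ^ 2) := by
  obtain ⟨κ, hκ, hSbar⟩ := exists_eventually_norm_SbarC_zOf_le hlast hw hS hzero hm
  obtain ⟨C, hC, hamp⟩ := (isBigO_amplitude hw hzero
    (hS.lastWeight_one_pos hlast hw hzero) hm hm1).exists_pos
  have hlt : ∀ᶠ x : ℝ × (Fin (d + 1) → ℝ) in 𝓝 (0, argOf d m), x.1 < 1 :=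
    ContinuousAt.eventually_lt (by fun_prop) continuousAt_const (by norm_num)
  refine ⟨C, hC, κ, hκ, ?_⟩
  filter_upwards [hamp.bound, nhdsWithin_le_nhds hSbar, nhdsWithin_le_nhds hlt,
    self_mem_nhdsWithin] with x hamp hSbar hlt (hx : 0 < x.1) n
  rw [Real.norm_of_nonneg (by positivity)] at hamp
  rw [norm_resIntegrand n hlt, mul_assoc]
  gcongr
  calc ‖SbarC d S w (zOf d x.1 x.2)‖ ^ n
      ≤ (S1 d S w * Real.exp (4 * x.1 ^ 2 - κ * ∑ j, (x.2 j - argOf d m j) ^ 2)) ^ n := by gcongr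
    _ = _ := by
      rw [mul_pow, ← Real.exp_nat_mul, mul_assoc, ← Real.exp_add]
      ring_nf

theorem norm_sub_argOf_le_of_mem_box {m : Fin (d + 1) → Fin 4} {δ : ℝ} {θ : Fin (d + 1) → ℝ}
    (hθ : θ ∈ box d m δ) : ‖θ - argOf d m‖ ≤ |δ| := by
  refine (pi_norm_le_iff_of_nonneg (abs_nonneg δ)).mpr fun j => ?_
  obtain ⟨hlower, hupper⟩ := hθ j (Set.mem_univ j)
  rw [Pi.sub_apply, Real.norm_eq_abs]
  exact (abs_le.mpr ⟨by linarith, by linarith⟩).trans (le_abs_self δ)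

theorem exists_eventually_norm_resIntegral_le
    (hlast : ∀ i ∈ S, i (Fin.last d) = -1 ∨ i (Fin.last d) = 0 ∨ i (Fin.last d) = 1)
    (hw : ∀ i ∈ S, 0 < w i) (hS : IsNondegenerate S)
    (hzero : lastWeight S w (-1) = lastWeight S w 1)
    {m : Fin (d + 1) → Fin 4} (hm : m ∈ GammaIdx d S w) (hm1 : m ≠ fun _ => 0) :
    ∃ C, ∀ᶠ y : ℝ × ℝ in 𝓝[{y | 0 < y.1}] 0, ∀ n : ℕ, 0 < n →
      ‖resIntegral d S w n y.1 y.2 m‖ ≤ C * ((y.1 ^ 2 + y.2 ^ 2) / y.1) *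
        Real.exp (4 * (n * y.1 ^ 2)) * (S1 d S w ^ n * (n : ℝ) ^ (-((d : ℝ) + 1) / 2)) := by
  obtain ⟨C, hC, κ, hκ, hbound⟩ :=
    exists_eventually_norm_resIntegrand_le hlast hw hS hzero hm hm1
  obtain ⟨r, hr, hbound⟩ := Metric.mem_nhdsWithin_iff.mp hbound
  have hS1 : 0 < S1 d S w := sum_pos hw hS.nonempty
  refine ⟨C * √(π / κ) ^ (d + 1), ?_⟩
  filter_upwards [nhdsWithin_le_nhds (Metric.ball_mem_nhds 0 hr), self_mem_nhdsWithin]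
    with ⟨ε, δ⟩ hy (hε : 0 < ε) n hn
  have hdist {θ : Fin (d + 1) → ℝ} (hθ : θ ∈ box d m δ) :
      ‖((ε, θ) : ℝ × (Fin (d + 1) → ℝ)) - (0, argOf d m)‖ ≤ ‖((ε, δ) : ℝ × ℝ)‖ := by
    rw [Prod.mk_sub_mk, sub_zero]
    exact max_le_max le_rfl (norm_sub_argOf_le_of_mem_box hθ)
  have hnorm : ‖((ε, δ) : ℝ × ℝ)‖ ^ 2 ≤ ε ^ 2 + δ ^ 2 := by
    rw [Prod.norm_mk]
    rcases max_choice ‖ε‖ ‖δ‖ with h | h <;> rw [h, Real.norm_eq_abs, sq_abs] <;>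
      linarith [sq_nonneg ε, sq_nonneg δ]
  have hintegrand : ∀ θ ∈ box d m δ, ‖resIntegrand d S w n ε θ‖
      ≤ C * ((ε ^ 2 + δ ^ 2) / ε) * (S1 d S w ^ n * Real.exp (4 * (n * ε ^ 2))) *
        Real.exp (-(κ * n) * ∑ j, (θ j - argOf d m j) ^ 2) := fun θ hθ => by
    have hmem : ((ε, θ) : ℝ × (Fin (d + 1) → ℝ)) ∈ Metric.ball (0, argOf d m) r :=
      mem_ball_iff_norm.mpr ((hdist hθ).trans_lt (mem_ball_zero_iff.mp hy))
    refine (hbound ⟨hmem, hε⟩ n).trans ?_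
    gcongr
    exact (pow_le_pow_left₀ (norm_nonneg _) (hdist hθ) 2).trans hnorm
  have hbox : MeasurableSet (box d m δ) := MeasurableSet.univ_pi fun _ => measurableSet_Ioo
  refine (norm_setIntegral_le_of_norm_le_gaussian hbox (argOf d m) (by positivity)
    (by positivity) hintegrand).trans_eq ?_
  rw [← div_div, sqrt_div_pow (π / κ) n.cast_nonneg, Fintype.card_fin]
  push_cast
  ring

end ZeroDrift

theorem other_points_negligible_general
    (d : ℕ) (S : Finset (Fin (d + 1) → ℤ)) (w : (Fin (d + 1) → ℤ) → ℝ)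
    (hlast : ∀ i ∈ S, i (Fin.last d) = -1 ∨ i (Fin.last d) = 0 ∨ i (Fin.last d) = 1)
    (hw : ∀ i ∈ S, 0 < w i) (hS : ZeroDrift.IsNondegenerate S)
    (hzero : (∑ i ∈ S.filter fun i => i (Fin.last d) = -1, w i)
        = ∑ i ∈ S.filter fun i => i (Fin.last d) = 1, w i)
    {ε δ : ℕ → ℝ} (hεpos : ∀ᶠ n in atTop, 0 < ε n)
    (hε : ε =O[atTop] fun n => (n : ℝ) ^ (-(1 / 2) : ℝ)) (hδ : (fun n => δ n ^ 2) =o[atTop] ε)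
    (m : Fin (d + 1) → Fin 4) (hm : m ∈ ZeroDrift.GammaIdx d S w) (hm1 : m ≠ fun _ => 0) :
    Tendsto (fun n : ℕ => ‖ZeroDrift.resIntegral d S w n (ε n) (δ n) m‖ /
      (ZeroDrift.S1 d S w ^ n * (n : ℝ) ^ (-((d : ℝ) + 1) / 2))) atTop (𝓝 0) := by
  obtain ⟨C, hC⟩ :=
    ZeroDrift.exists_eventually_norm_resIntegral_le hlast hw hS hzero hm hm1
  have hε0 : Tendsto ε atTop (𝓝 0) := hε.trans_tendsto <|
    (tendsto_rpow_neg_atTop one_half_pos).comp tendsto_natCast_atTop_atTop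
  have hδ0 : Tendsto δ atTop (𝓝 0) :=
    tendsto_zero_of_tendsto_sq_zero (hδ.isBigO.trans_tendsto hε0)
  have hy : Tendsto (fun n => (ε n, δ n)) atTop (𝓝[{y | 0 < y.1}] 0) :=
    tendsto_nhdsWithin_iff.mpr ⟨hε0.prodMk_nhds hδ0, hεpos⟩
  have hamp : (fun n => C * ((ε n ^ 2 + δ n ^ 2) / ε n)) =o[atTop] fun _ => (1 : ℝ) := by
    have hsum := hε0.add hδ.tendsto_div_nhds_zero
    rw [add_zero] at hsum
    refine (((isLittleO_one_iff ℝ).mpr hsum).const_mul_left C).congr_left fun n => ?_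
    rw [add_div, sq (ε n), mul_self_div_self]
  have hS1 : 0 < ZeroDrift.S1 d S w := sum_pos hw hS.nonempty
  have hlim := hamp.mul_isBigO (isBigO_exp_mul_mul_sq hε 4)
  rw [mul_one, isLittleO_one_iff] at hlim
  refine squeeze_zero' (.of_forall fun n => by positivity) ?_ hlim
  filter_upwards [hy.eventually hC, eventually_gt_atTop 0] with n hbound hn
  have : 0 < (n : ℝ) := mod_cast hn
  exact (div_le_iff₀ (by positivity)).mpr (hbound n hn)

/-- Proposition (other points are negligible): for `w ∈ Γ` with `w ≠ (1,…,1)`, the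
residue integral over `N_w` is `o(S(1)^n n^{-(d+1)/2})`. -/
theorem other_points_negligible
    (d : ℕ) (S : Finset (Fin (d + 1) → ℤ)) (w : (Fin (d + 1) → ℤ) → ℝ)
    (hstep : ∀ i ∈ S, (∀ j, i j = -1 ∨ i j = 0 ∨ i j = 1) ∧ i ≠ 0)
    (hw : ∀ i ∈ S, 0 < w i)
    (hsym : ∀ k : Fin d, SymmetricAxis (d + 1) S w (Fin.castSucc k))
    (hfwd : ∀ k : Fin (d + 1), ∃ i ∈ S, i k = 1)
    (hbwd : ∀ k : Fin (d + 1), ∃ i ∈ S, i k = -1)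
    (hzero : (∑ i ∈ S.filter fun i => i (Fin.last d) = -1, w i)
        = ∑ i ∈ S.filter fun i => i (Fin.last d) = 1, w i)
    (α β : ℝ) (hα : 1 / 2 < α) (hαβ : α < 2 * β) (hsum : 1 < α + β)
    (hβ1 : 1 / 3 < β) (hβ2 : β < 1 / 2)
    (m : Fin (d + 1) → Fin 4) (hm : m ∈ ZeroDrift.GammaIdx d S w)
    (hm1 : m ≠ fun _ => 0) :
    Tendsto (fun n : ℕ =>
      ‖ZeroDrift.resIntegral d S w n ((n : ℝ) ^ (-α)) ((n : ℝ) ^ (-β)) m‖ /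
        (ZeroDrift.S1 d S w ^ n * (n : ℝ) ^ (-((d : ℝ) + 1) / 2)))
      atTop (nhds 0) := by
  have hS : ZeroDrift.IsNondegenerate S := by
    obtain ⟨i, hi, hone⟩ := hfwd (Fin.last d)
    obtain ⟨k, hk, hneg⟩ := hbwd (Fin.last d)
    exact ZeroDrift.isNondegenerate_of_update_neg_mem (fun k i hi => (hsym k i hi).1)
      (fun k => (hfwd k.castSucc).imp fun i hi => ⟨hi.1, by simp [hi.2]⟩)
      ⟨i, hi, k, hk, by simp [hone, hneg]⟩
  exact other_points_negligible_general d S w (fun i hi => (hstep i hi).1 (Fin.last d)) hw hS hzero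
    (eventually_natCast_rpow_pos _) (isLittleO_natCast_rpow (by linarith)).isBigO
    (isLittleO_natCast_rpow_sq (by linarith)) m hm hm1

end
end
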